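/- arXiv:2111.11963 — 6 statements merged into one kernel-verified Lean document; each statement's English description precedes it below -/
import Mathlib

section
/- For every single-period reservation problem there exists a finitely supported probability distribution over period-1 reservation tables Z such that: (i) almost surely every internal entry satisfies Z_{ij} ∈ {⌊α_j q_i⌋, ⌈α_j q_i⌉} and every column total satisfies ∑_{i∈D} Z_{ij} ∈ {⌊α_j ∑_{i∈D} q_i⌋, ⌈α_j ∑_{i∈D} q_i⌉} (the lottery stays within quota); and (ii) E[Z_{ij}] = α_j q_i for every department i and category j (the lottery is unbiased). -/
open Finset

/-!
A real table whose row and column sums are integers is a point of a capacitated transportation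
polytope with integral data, so by Krein–Milman it suffices that every extreme point of such a
polytope is integral. If some entry is not an integer, then, the marginals being integers, each row
and each column meeting the set `F` of nonintegral cells meets it at least twice. Hence `F` meets at
most `#F / 2` rows and at most `#F / 2` columns, and one of the corresponding marginal conditions is
redundant, so some nonzero table supported on `F` has zero marginals. The table can be moved a
little in both directions along it, contradicting extremality.

Arbitrary marginals are handled by adding a slack column and a slack row that complete each row and
each column sum to its ceiling: rounding the slack then rounds the sum.
-/

section IntegerRounding

variable {K : Type*} [Ring K] [LinearOrder K] [FloorRing K] [IsOrderedRing K]

theorem mem_Icc_floor_ceil_iff {x : K} {n : ℤ} :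
    n ∈ Set.Icc ⌊x⌋ ⌈x⌉ ↔ n = ⌊x⌋ ∨ n = ⌈x⌉ := by
  have := Int.ceil_le_floor_add_one x
  have := Int.floor_le_ceil x
  rw [Set.mem_Icc]
  omega

theorem ceil_sub_mem_Icc_floor_ceil {x : K} {n : ℤ}
    (hn : n ∈ Set.Icc ⌊⌈x⌉ - x⌋ ⌈⌈x⌉ - x⌉) : ⌈x⌉ - n ∈ Set.Icc ⌊x⌋ ⌈x⌉ := by
  rw [sub_eq_add_neg, Int.floor_intCast_add, Int.ceil_intCast_add, Int.floor_neg, Int.ceil_neg,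
    Set.mem_Icc] at hn
  rw [Set.mem_Icc]
  omega

end IntegerRounding

theorem exists_ne_notMem_of_sum_mem {ι G : Type*} [Fintype ι] [AddCommGroup G]
    {H : AddSubgroup G} {f : ι → G} (hsum : ∑ i, f i ∈ H) {i : ι} (hi : f i ∉ H) :
    ∃ i', i' ≠ i ∧ f i' ∉ H := by
  classical
  by_contra! h
  rw [← add_sum_erase _ _ (mem_univ i)] at hsum
  exact hi ((H.add_mem_cancel_right (H.sum_mem fun k hk => h k (ne_of_mem_erase hk))).1 hsum)

theorem two_mul_card_image_le_card {α β : Type*} [DecidableEq β] {s : Finset α} {f : α → β}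
    (h : ∀ x ∈ s, ∃ y ∈ s, y ≠ x ∧ f y = f x) : 2 * #(s.image f) ≤ #s := by
  refine mul_card_image_le_card_of_maps_to (fun x hx => mem_image_of_mem f hx) 2 fun b hb => ?_
  obtain ⟨x, hx, rfl⟩ := mem_image.1 hb
  obtain ⟨y, hy, hne, hxy⟩ := h x hx
  exact one_lt_card.2 ⟨y, by simp [hy, hxy], x, by simp [hx], hne⟩

theorem exists_fin_sum_smul_eq_of_mem_convexHull_image {K E β : Type*} [Field K] [LinearOrder K]
    [IsStrictOrderedRing K] [AddCommGroup E] [Module K E] {f : β → E} {s : Set β} {x : E}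
    (hx : x ∈ convexHull K (f '' s)) :
    ∃ (N : ℕ) (p : Fin N → K) (z : Fin N → β), (∀ k, 0 ≤ p k) ∧ ∑ k, p k = 1 ∧
      (∀ k, z k ∈ s) ∧ ∑ k, p k • f (z k) = x := by
  obtain ⟨ι, _, w, y, hw0, hw1, hy, hyx⟩ := mem_convexHull_iff_exists_fintype.1 hx
  choose z hzs hzy using hy
  let e := (Fintype.equivFin ι).symm
  refine ⟨Fintype.card ι, w ∘ e, z ∘ e, fun k => hw0 (e k), (e.sum_comp w).trans hw1,
    fun k => hzs (e k), ?_⟩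
  simpa [hzy, hyx] using e.sum_comp fun i => w i • f (z i)

section ExtremePoints

variable {ι : Type*} [Finite ι] {l u y e : ι → ℝ}

theorem eventually_add_smul_mem_Icc (hy : y ∈ Set.Icc l u)
    (he : ∀ i, y i ∉ Set.Ioo (l i) (u i) → e i = 0) :
    ∀ᶠ ε : ℝ in nhds 0, y + ε • e ∈ Set.Icc l u := by
  simp only [← Set.pi_univ_Icc, Set.mem_univ_pi]
  refine Filter.eventually_all.2 fun i => ?_
  by_cases hi : y i ∈ Set.Ioo (l i) (u i)
  · have hcont : ContinuousAt (fun ε : ℝ => (y + ε • e) i) 0 := by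
      simp only [Pi.add_apply, Pi.smul_apply]
      fun_prop
    exact hcont.eventually_mem (Icc_mem_nhds (by simpa using hi.1) (by simpa using hi.2))
  · simpa [he i hi] using ⟨hy.1 i, hy.2 i⟩

theorem eq_zero_of_mem_extremePoints_Icc_inter_fiber {M : Type*} [AddCommMonoid M]
    [Module ℝ M] {A : (ι → ℝ) →ₗ[ℝ] M} {b : M}
    (hy : y ∈ (Set.Icc l u ∩ A ⁻¹' {b}).extremePoints ℝ) (hAe : A e = 0)
    (he : ∀ i, y i ∉ Set.Ioo (l i) (u i) → e i = 0) : e = 0 := by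
  have hnear := eventually_add_smul_mem_Icc hy.1.1 he
  have hnear_neg : ∀ᶠ ε : ℝ in nhds 0, y + (-ε) • e ∈ Set.Icc l u :=
    (continuous_neg.tendsto' 0 0 neg_zero).eventually hnear
  obtain ⟨ε, ⟨hpos, hneg⟩, hε⟩ := (((hnear.and hnear_neg).filter_mono nhdsWithin_le_nhds).and
    (self_mem_nhdsWithin (a := (0 : ℝ)) (s := Set.Ioi 0))).exists
  have hfiber : ∀ t : ℝ, y + t • e ∈ A ⁻¹' {b} := fun t => by
    simpa [hAe] using hy.1.2
  have heq : y + ε • e = y := hy.2 ⟨hpos, hfiber ε⟩ ⟨hneg, hfiber (-ε)⟩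
    ⟨1 / 2, 1 / 2, by norm_num, by norm_num, by norm_num, by module⟩
  exact (smul_eq_zero.1 (add_eq_left.1 heq)).resolve_left (ne_of_gt hε)

end ExtremePoints

section Tables

variable {R C : Type*} [Fintype R] [Fintype C]

/-- The row sums and the column sums of a table, as a linear map. Tables are indexed by cells
`R × C`, so that sets of cells are finsets of indices. -/
def marginals (K R C : Type*) [Semiring K] [Fintype R] [Fintype C] :
    (R × C → K) →ₗ[K] (R → K) × (C → K) where
  toFun X := (fun i => ∑ j, X (i, j), fun j => ∑ i, X (i, j))
  map_add' X Y := by ext <;> simp [sum_add_distrib]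
  map_smul' a X := by ext <;> simp [mul_sum]

theorem marginals_apply {K : Type*} [Semiring K] (X : R × C → K) :
    marginals K R C X = (fun i => ∑ j, X (i, j), fun j => ∑ i, X (i, j)) :=
  rfl

theorem marginals_eq_zero_of_forall_ne {K : Type*} [Semiring K] {E : R × C → K} (j₀ : C)
    (hrow : ∀ i, ∑ j, E (i, j) = 0) (hcol : ∀ j, j ≠ j₀ → ∑ i, E (i, j) = 0) :
    marginals K R C E = 0 := by
  have hcol₀ : ∑ i, E (i, j₀) = 0 := by
    rw [← Fintype.sum_eq_single (f := fun j => ∑ i, E (i, j)) j₀ hcol, sum_comm]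
    exact sum_eq_zero fun i _ => hrow i
  refine Prod.ext (funext hrow) (funext fun j => ?_)
  by_cases hj : j = j₀
  · exact hj ▸ hcol₀
  · exact hcol j hj

theorem exists_ne_zero_marginals_eq_zero (K : Type*) [DivisionRing K] {F : Finset (R × C)}
    (hF : F.Nonempty) (hrow : ∀ x ∈ F, ∃ y ∈ F, y ≠ x ∧ y.1 = x.1)
    (hcol : ∀ x ∈ F, ∃ y ∈ F, y ≠ x ∧ y.2 = x.2) :
    ∃ E : R × C → K, E ≠ 0 ∧ (∀ x ∉ F, E x = 0) ∧ marginals K R C E = 0 := by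
  classical
  set A := F.image Prod.fst
  set B := F.image Prod.snd
  obtain ⟨x₀, hx₀⟩ := hF
  set j₀ := x₀.2
  have hj₀ : j₀ ∈ B := mem_image_of_mem Prod.snd hx₀
  let L : (R × C → K) →ₗ[K] ((Fᶜ : Finset (R × C)) → K) × (A → K) × (B.erase j₀ → K) :=
    (LinearMap.funLeft K K Subtype.val).prod
      ((LinearMap.funLeft K K Subtype.val).prodMap (LinearMap.funLeft K K Subtype.val) ∘ₗ
        marginals K R C)
  have hfinrank : Module.finrank K (((Fᶜ : Finset (R × C)) → K) × (A → K) × (B.erase j₀ → K)) <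
      Module.finrank K (R × C → K) := by
    have hA : 2 * #A ≤ #F := two_mul_card_image_le_card hrow
    have hB : 2 * #B ≤ #F := two_mul_card_image_le_card hcol
    have hB_pos : 0 < #B := card_pos.2 ⟨j₀, hj₀⟩
    have hF_compl := card_add_card_compl F
    simp only [Module.finrank_prod, Module.finrank_fintype_fun_eq_card, Fintype.card_coe,
      card_erase_of_mem hj₀]
    omega
  obtain ⟨E, hE, hE0⟩ := (Submodule.ne_bot_iff _).1 (LinearMap.ker_ne_bot_of_finrank_lt hfinrank
    (f := L))
  have hEF : ∀ x ∉ F, E x = 0 := fun x hx =>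
    congrFun (congrArg Prod.fst hE) ⟨x, mem_compl.2 hx⟩
  have hErow : ∀ i, ∑ j, E (i, j) = 0 := fun i => by
    by_cases hi : i ∈ A
    · exact congrFun (congrArg (·.2.1) hE) ⟨i, hi⟩
    · exact sum_eq_zero fun j _ => hEF _ fun h => hi (mem_image_of_mem Prod.fst h)
  have hEcol : ∀ j, j ≠ j₀ → ∑ i, E (i, j) = 0 := fun j hj => by
    by_cases hjB : j ∈ B
    · exact congrFun (congrArg (·.2.2) hE) ⟨j, mem_erase.2 ⟨hj, hjB⟩⟩
    · exact sum_eq_zero fun i _ => hEF _ fun h => hjB (mem_image_of_mem Prod.snd h)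
  exact ⟨E, hE0, hEF, marginals_eq_zero_of_forall_ne j₀ hErow hEcol⟩

/-- The capacitated transportation polytope: the tables with prescribed marginals `b` whose entries
lie between the capacities `l` and `u`. Over `ℤ` these are the integral points of the polytope. -/
def transportationPolytope {K : Type*} [Semiring K] [Preorder K] (l u : R × C → K)
    (b : (R → K) × (C → K)) : Set (R × C → K) :=
  Set.Icc l u ∩ marginals K R C ⁻¹' {b}

theorem isCompact_transportationPolytope (l u : R × C → ℝ) (b : (R → ℝ) × (C → ℝ)) :
    IsCompact (transportationPolytope l u b) :=
  isCompact_Icc.inter_right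
    (isClosed_singleton.preimage (marginals ℝ R C).continuous_of_finiteDimensional)

theorem convex_transportationPolytope (l u : R × C → ℝ) (b : (R → ℝ) × (C → ℝ)) :
    Convex ℝ (transportationPolytope l u b) :=
  (convex_Icc l u).inter ((convex_singleton b).linear_preimage (marginals ℝ R C))

variable {l u : R × C → ℤ} {r : R → ℤ} {c : C → ℤ}

theorem mem_range_intCast_of_mem_extremePoints_transportationPolytope {Y : R × C → ℝ}
    (hY : Y ∈ (transportationPolytope ((↑) ∘ l) ((↑) ∘ u) ((↑) ∘ r, (↑) ∘ c)).extremePoints ℝ)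
    (x : R × C) : Y x ∈ (Int.castAddHom ℝ).range := by
  classical
  by_contra hx
  let F : Finset (R × C) := {x | Y x ∉ (Int.castAddHom ℝ).range}
  have hmemF : ∀ {x}, x ∈ F ↔ Y x ∉ (Int.castAddHom ℝ).range := mem_filter_univ _
  have hrow_sum : ∀ i, ∑ j, Y (i, j) ∈ (Int.castAddHom ℝ).range := fun i =>
    ⟨r i, (congrFun (congrArg Prod.fst hY.1.2) i).symm⟩
  have hcol_sum : ∀ j, ∑ i, Y (i, j) ∈ (Int.castAddHom ℝ).range := fun j =>
    ⟨c j, (congrFun (congrArg Prod.snd hY.1.2) j).symm⟩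
  have hrow : ∀ x ∈ F, ∃ y ∈ F, y ≠ x ∧ y.1 = x.1 := fun (i, j) hij => by
    obtain ⟨j', hne, hj'⟩ := exists_ne_notMem_of_sum_mem (hrow_sum i) (hmemF.1 hij)
    exact ⟨(i, j'), hmemF.2 hj', by simpa using hne, rfl⟩
  have hcol : ∀ x ∈ F, ∃ y ∈ F, y ≠ x ∧ y.2 = x.2 := fun (i, j) hij => by
    obtain ⟨i', hne, hi'⟩ := exists_ne_notMem_of_sum_mem (f := fun i => Y (i, j)) (hcol_sum j)
      (hmemF.1 hij)
    exact ⟨(i', j), hmemF.2 hi', by simpa using hne, rfl⟩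
  obtain ⟨E, hE0, hEF, hE⟩ :=
    exists_ne_zero_marginals_eq_zero ℝ ⟨x, hmemF.2 hx⟩ hrow hcol
  refine hE0 (eq_zero_of_mem_extremePoints_Icc_inter_fiber hY hE fun x hx_tight => hEF x fun hxF =>
    hx_tight ⟨(hY.1.1.1 x).lt_of_ne fun h => ?_, (hY.1.1.2 x).lt_of_ne fun h => ?_⟩)
  · exact hmemF.1 hxF ⟨l x, h⟩
  · exact hmemF.1 hxF ⟨u x, h.symm⟩

theorem extremePoints_transportationPolytope_subset :
    (transportationPolytope ((↑) ∘ l) ((↑) ∘ u) ((↑) ∘ r, (↑) ∘ c)).extremePoints ℝ ⊆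
      (fun Z => ((↑) ∘ Z : R × C → ℝ)) '' transportationPolytope l u (r, c) := by
  intro Y hY
  choose Z hZ using mem_range_intCast_of_mem_extremePoints_transportationPolytope hY
  obtain rfl : (↑) ∘ Z = Y := funext hZ
  obtain ⟨⟨hl, hu⟩, hb⟩ := hY.1
  refine ⟨Z, ⟨⟨fun x => Int.cast_le.1 (hl x), fun x => Int.cast_le.1 (hu x)⟩, ?_⟩, rfl⟩
  simp only [Set.mem_preimage, Set.mem_singleton_iff, marginals_apply, Prod.mk.injEq, funext_iff,
    Function.comp_apply] at hb ⊢
  exact_mod_cast hb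

theorem transportationPolytope_subset_convexHull :
    transportationPolytope ((↑) ∘ l) ((↑) ∘ u) ((↑) ∘ r, (↑) ∘ c) ⊆
      convexHull ℝ ((fun Z => ((↑) ∘ Z : R × C → ℝ)) '' transportationPolytope l u (r, c)) := by
  classical
  have hfinite : (transportationPolytope l u (r, c)).Finite :=
    (Set.finite_Icc l u).subset Set.inter_subset_left
  rw [← closure_convexHull_extremePoints (isCompact_transportationPolytope _ _ _)
    (convex_transportationPolytope _ _ _)]
  exact closure_minimal (convexHull_mono extremePoints_transportationPolytope_subset)
    ((hfinite.image _).isClosed_convexHull ℝ)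

section Slack

variable {K : Type*} [Ring K] [LinearOrder K] [FloorRing K]

/-- The integer tables obtained from `X` by rounding every entry, every row sum and every column
sum up or down. -/
def controlledRoundings (X : R × C → K) : Set (R × C → ℤ) :=
  {Z | (∀ x, Z x ∈ Set.Icc ⌊X x⌋ ⌈X x⌉) ∧
    (∀ i, ∑ j, Z (i, j) ∈ Set.Icc ⌊∑ j, X (i, j)⌋ ⌈∑ j, X (i, j)⌉) ∧
    ∀ j, ∑ i, Z (i, j) ∈ Set.Icc ⌊∑ i, X (i, j)⌋ ⌈∑ i, X (i, j)⌉}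

/-- The table `X` bordered by a slack column and a slack row (both indexed by `none`) that complete
each row sum and each column sum to its ceiling. The corner entry makes the marginals of the border
itself integers. -/
def slackTable (X : R × C → K) : Option R × Option C → K
  | (some i, some j) => X (i, j)
  | (some i, none) => ⌈∑ j, X (i, j)⌉ - ∑ j, X (i, j)
  | (none, some j) => ⌈∑ i, X (i, j)⌉ - ∑ i, X (i, j)
  | (none, none) => ∑ i, ∑ j, X (i, j)

/-- The row sums and the column sums of `slackTable X`, which are integers. -/
def slackMarginals (X : R × C → K) : (Option R → ℤ) × (Option C → ℤ) :=
  (fun o => o.elim (∑ j, ⌈∑ i, X (i, j)⌉) fun i => ⌈∑ j, X (i, j)⌉,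
    fun o => o.elim (∑ i, ⌈∑ j, X (i, j)⌉) fun j => ⌈∑ i, X (i, j)⌉)

theorem marginals_slackTable (X : R × C → K) :
    marginals K (Option R) (Option C) (slackTable X) =
      ((↑) ∘ (slackMarginals X).1, (↑) ∘ (slackMarginals X).2) := by
  ext (_ | _) <;>
    simp [marginals_apply, slackTable, slackMarginals, Fintype.sum_option,
      sum_comm (s := (univ : Finset C))]

theorem slackTable_mem_transportationPolytope (X : R × C → K) :
    slackTable X ∈ transportationPolytope ((↑) ∘ (⌊slackTable X ·⌋)) ((↑) ∘ (⌈slackTable X ·⌉))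
      ((↑) ∘ (slackMarginals X).1, (↑) ∘ (slackMarginals X).2) :=
  ⟨⟨fun _ => Int.floor_le _, fun _ => Int.le_ceil _⟩, marginals_slackTable X⟩

theorem comp_map_some_mem_controlledRoundings [IsOrderedRing K] {X : R × C → K}
    {Z : Option R × Option C → ℤ}
    (hZ : Z ∈ transportationPolytope (⌊slackTable X ·⌋) (⌈slackTable X ·⌉) (slackMarginals X)) :
    Z ∘ Prod.map some some ∈ controlledRoundings X := by
  obtain ⟨⟨hl, hu⟩, hb⟩ := hZ
  refine ⟨fun (i, j) => ⟨hl (some i, some j), hu (some i, some j)⟩, fun i => ?_, fun j => ?_⟩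
  · have hsum : ∑ o, Z (some i, o) = ⌈∑ j, X (i, j)⌉ := congrFun (congrArg Prod.fst hb) (some i)
    rw [Fintype.sum_option, ← eq_sub_iff_add_eq'] at hsum
    exact hsum ▸ ceil_sub_mem_Icc_floor_ceil ⟨hl (some i, none), hu (some i, none)⟩
  · have hsum : ∑ o, Z (o, some j) = ⌈∑ i, X (i, j)⌉ := congrFun (congrArg Prod.snd hb) (some j)
    rw [Fintype.sum_option, ← eq_sub_iff_add_eq'] at hsum
    exact hsum ▸ ceil_sub_mem_Icc_floor_ceil ⟨hl (none, some j), hu (none, some j)⟩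

end Slack

theorem mem_convexHull_controlledRoundings (X : R × C → ℝ) :
    X ∈ convexHull ℝ ((fun Z => ((↑) ∘ Z : R × C → ℝ)) '' controlledRoundings X) := by
  let restrict : (Option R × Option C → ℝ) →ₗ[ℝ] R × C → ℝ :=
    LinearMap.funLeft ℝ ℝ (Prod.map some some)
  have hX : restrict (slackTable X) ∈ restrict '' _ := Set.mem_image_of_mem restrict
    (transportationPolytope_subset_convexHull (slackTable_mem_transportationPolytope X))
  rw [restrict.image_convexHull, Set.image_image] at hX
  refine convexHull_mono ?_ hX
  rintro _ ⟨Z, hZ, rfl⟩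
  exact ⟨Z ∘ Prod.map some some, comp_map_some_mem_controlledRoundings hZ, rfl⟩

end Tables

/-- For every single-period reservation problem there exists a
finitely supported probability distribution over period-1 reservation tables that
stays within quota (almost surely every internal entry and every column total is
the floor or the ceiling of the corresponding fair share) and is unbiased. -/
theorem single_period_unbiased_lottery_within_quota
    (D C : Type) [Fintype D] [Fintype C]
    (hD : 2 ≤ Fintype.card D) (hC : 2 ≤ Fintype.card C)
    (α : C → ℝ) (hα0 : ∀ j, 0 < α j) (hα1 : ∀ j, α j < 1)
    (hαsum : ∑ j, α j = 1)
    (q : D → ℕ) :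
    ∃ (N : ℕ) (p : Fin N → ℝ) (Z : Fin N → D → C → ℕ),
      (∀ k, 0 ≤ p k) ∧ (∑ k, p k = 1) ∧
      (∀ k i, ∑ j, Z k i j = q i) ∧
      (∀ k, p k ≠ 0 → ∀ i j,
        ((Z k i j : ℤ) = ⌊α j * (q i : ℝ)⌋ ∨ (Z k i j : ℤ) = ⌈α j * (q i : ℝ)⌉)) ∧
      (∀ k, p k ≠ 0 → ∀ j,
        (((∑ i, Z k i j : ℕ) : ℤ) = ⌊α j * ((∑ i, q i : ℕ) : ℝ)⌋ ∨
         ((∑ i, Z k i j : ℕ) : ℤ) = ⌈α j * ((∑ i, q i : ℕ) : ℝ)⌉)) ∧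
      (∀ i j, ∑ k, p k * ((Z k i j : ℕ) : ℝ) = α j * (q i : ℝ)) := by
  let X : D × C → ℝ := fun x => α x.2 * q x.1
  have hrow : ∀ i, ∑ j, X (i, j) = q i := fun i => by simp [X, ← sum_mul, hαsum]
  have hcol : ∀ j, ∑ i, X (i, j) = α j * ((∑ i, q i : ℕ) : ℝ) := fun j => by
    simp [X, mul_sum]
  obtain ⟨N, p, Z, hp0, hp1, hZ, hmean⟩ :=
    exists_fin_sum_smul_eq_of_mem_convexHull_image (mem_convexHull_controlledRoundings X)
  have hZ0 : ∀ k x, 0 ≤ Z k x := fun k x =>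
    (Int.floor_nonneg.2 (mul_nonneg (hα0 x.2).le (q x.1).cast_nonneg)).trans ((hZ k).1 x).1
  lift Z to Fin N → D × C → ℕ using hZ0
  refine ⟨N, p, fun k i j => Z k (i, j), hp0, hp1, fun k i => ?_,
    fun k _ i j => mem_Icc_floor_ceil_iff.1 ((hZ k).1 (i, j)), fun k _ j => ?_, fun i j => ?_⟩
  · have hmem := (hZ k).2.1 i
    rw [hrow, Int.floor_natCast, Int.ceil_natCast, Set.Icc_self, Set.mem_singleton_iff] at hmem
    rwa [← Nat.cast_inj (R := ℤ), Nat.cast_sum]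
  · rw [← hcol, Nat.cast_sum]
    exact mem_Icc_floor_ceil_iff.1 ((hZ k).2.2 j)
  · simpa using congrFun hmean (i, j)
end

section
/- Let A be an m×n real matrix all of whose row sums and all of whose column sums are integers, and suppose A has at least one non-integer entry. Then there exist β ∈ (0,1) and real m×n matrices B and C such that: A = β·B + (1−β)·C; B and C have the same row sums and the same column sums as A; ⌊A_{ij}⌋ ≤ B_{ij} ≤ ⌈A_{ij}⌉ and ⌊A_{ij}⌋ ≤ C_{ij} ≤ ⌈A_{ij}⌉ for all i,j; and each of B and C has strictly fewer non-integer entries than A. -/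
open Finset

/-!
Since no line of the matrix contains exactly one fractional entry, the fractional entries number at
least twice the lines of each direction that they meet, hence at least as many as all the lines
they meet. Prescribing zero sums along these lines is redundant by one equation, because the row
sums and the column sums have the same total; so there are fewer equations than unknowns, and some
nonzero matrix `D` supported on the fractional entries has zero line sums. (A cycle of fractional
entries with alternating signs is one such `D`.) Moving from `A` along `D` and along `-D`, each time
until the first entry becomes an integer, gives `B` and `C`.
-/

/-- The set of positions of the fractional (that is, non-integer) entries of a family. Rows and
columns are families indexed by one coordinate, and a whole matrix `A` is treated as the family
`Function.uncurry A`. -/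
def fractionalSupport {α K : Type*} [IntCast K] (f : α → K) : Set α :=
  {a | ¬ ∃ z : ℤ, f a = z}

section Counting

theorem not_existsUnique_notMem_of_sum_mem {α M : Type*} [Fintype α] [AddCommGroup M]
    (H : AddSubgroup M) {f : α → M} (hf : ∑ a, f a ∈ H) : ¬ ∃! a, f a ∉ H := by
  classical
  rintro ⟨a, ha, hunique⟩
  have hrest : ∑ b ∈ univ.erase a, f b ∈ H :=
    sum_mem fun b hb => by_contra fun hbH => ne_of_mem_erase hb (hunique b hbH)
  rw [← add_sum_erase univ f (mem_univ a)] at hf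
  exact ha ((H.add_mem_cancel_right hrest).1 hf)

theorem not_existsUnique_mem_fractionalSupport {α R : Type*} [Fintype α] [Ring R] {f : α → R}
    (hf : ∃ z : ℤ, ∑ a, f a = z) : ¬ ∃! a, a ∈ fractionalSupport f := by
  have mem_range_iff (r : R) : r ∈ (Int.castAddHom R).range ↔ ∃ z : ℤ, r = z := by
    simp only [AddMonoidHom.mem_range, Int.coe_castAddHom, eq_comm]
  have h := not_existsUnique_notMem_of_sum_mem _ ((mem_range_iff _).2 hf)
  simpa only [fractionalSupport, Set.mem_ofPred_eq, mem_range_iff] using h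

theorem two_mul_card_image_le {α β : Type*} [DecidableEq β] {s : Finset α} {f : α → β}
    (h : ∀ b, ¬ ∃! a, a ∈ s ∧ f a = b) : 2 * #(s.image f) ≤ #s := by
  refine mul_card_image_le_card s 2 fun b hb => ?_
  obtain ⟨a, ha, hab⟩ := mem_image.1 hb
  by_contra! hlt
  have hle_one : #{a ∈ s | f a = b} ≤ 1 := Nat.le_of_lt_succ hlt
  exact h b ⟨a, ⟨ha, hab⟩, fun c hc =>
    card_le_one.1 hle_one c (mem_filter.2 hc) a (mem_filter.2 ⟨ha, hab⟩)⟩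

theorem card_image_fst_add_card_image_snd_le {ι κ : Type*} [DecidableEq ι] [DecidableEq κ]
    {s : Finset (ι × κ)} (hrow : ∀ i, ¬ ∃! j, (i, j) ∈ s) (hcol : ∀ j, ¬ ∃! i, (i, j) ∈ s) :
    #(s.image Prod.fst) + #(s.image Prod.snd) ≤ #s := by
  have hfst : 2 * #(s.image Prod.fst) ≤ #s := two_mul_card_image_le <| by
    rintro _ ⟨⟨i, j⟩, ⟨hij, rfl⟩, hunique⟩
    exact hrow i ⟨j, hij, fun k hk => congrArg Prod.snd (hunique (i, k) ⟨hk, rfl⟩)⟩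
  have hsnd : 2 * #(s.image Prod.snd) ≤ #s := two_mul_card_image_le <| by
    rintro _ ⟨⟨i, j⟩, ⟨hij, rfl⟩, hunique⟩
    exact hcol j ⟨i, hij, fun k hk => congrArg Prod.fst (hunique (k, j) ⟨hk, rfl⟩)⟩
  lia

end Counting

section ZeroLineSums

variable {K : Type*} [Field K]

theorem exists_ne_zero_forall_dual_eq_zero {V σ : Type*} [AddCommGroup V] [Module K V]
    [FiniteDimensional K V] [Fintype σ] (φ : σ → Module.Dual K V)
    (h : Fintype.card σ < Module.finrank K V) : ∃ v ≠ 0, ∀ k, φ k v = 0 := by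
  have hker : LinearMap.ker (LinearMap.pi φ) ≠ ⊥ :=
    LinearMap.ker_ne_bot_of_finrank_lt (by rwa [Module.finrank_fintype_fun_eq_card])
  obtain ⟨v, hv, hv0⟩ := Submodule.exists_mem_ne_zero_of_ne_bot hker
  exact ⟨v, hv0, fun k => congrFun hv k⟩

variable {ι κ : Type*} [Fintype ι] [Fintype κ]

theorem exists_ne_zero_line_sums_eq_zero_of_card_lt (s : Finset (ι × κ)) (I : Finset ι)
    (J : Finset κ) (h : #I + #J < #s) :
    ∃ D : ι × κ → K, D ≠ 0 ∧ (∀ x ∉ s, D x = 0) ∧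
      (∀ i ∈ I, ∑ j, D (i, j) = 0) ∧ ∀ j ∈ J, ∑ i, D (i, j) = 0 := by
  classical
  let φ : ↥sᶜ ⊕ I ⊕ J → Module.Dual K (ι × κ → K) :=
    Sum.elim (fun x => LinearMap.proj x.1) <|
      Sum.elim (fun i => ∑ j, LinearMap.proj (i.1, j)) fun j => ∑ i, LinearMap.proj (i, j.1)
  have hcard : Fintype.card (↥sᶜ ⊕ I ⊕ J) < Module.finrank K (ι × κ → K) := by
    have hcompl := card_compl_add_card s
    simp only [Fintype.card_sum, Fintype.card_coe, Module.finrank_fintype_fun_eq_card]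
    lia
  obtain ⟨D, hD, hφ⟩ := exists_ne_zero_forall_dual_eq_zero φ hcard
  refine ⟨D, hD, fun x hx => hφ (.inl ⟨x, mem_compl.2 hx⟩), fun i hi => ?_, fun j hj => ?_⟩
  · simpa [φ] using hφ (.inr (.inl ⟨i, hi⟩))
  · simpa [φ] using hφ (.inr (.inr ⟨j, hj⟩))

theorem exists_ne_zero_line_sums_eq_zero (K : Type*) [Field K] {s : Set (ι × κ)} (hs : s.Nonempty)
    (hrow : ∀ i, ¬ ∃! j, (i, j) ∈ s) (hcol : ∀ j, ¬ ∃! i, (i, j) ∈ s) :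
    ∃ D : ι × κ → K, D ≠ 0 ∧ D.support ⊆ s ∧
      (∀ i, ∑ j, D (i, j) = 0) ∧ ∀ j, ∑ i, D (i, j) = 0 := by
  classical
  lift s to Finset (ι × κ) using s.toFinite
  obtain ⟨⟨i₀, j₀⟩, h₀⟩ := hs
  have hi₀ : i₀ ∈ s.image Prod.fst := mem_image_of_mem Prod.fst h₀
  have hcard : #((s.image Prod.fst).erase i₀) + #(s.image Prod.snd) < #s := by
    have hle := card_image_fst_add_card_image_snd_le hrow hcol
    have hlt := card_erase_lt_of_mem hi₀
    lia
  obtain ⟨D, hD, hsupp, hI, hJ⟩ := exists_ne_zero_line_sums_eq_zero_of_card_lt (K := K) s _ _ hcard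
  have hcolsum (j : κ) : ∑ i, D (i, j) = 0 := by
    by_cases hj : j ∈ s.image Prod.snd
    · exact hJ j hj
    · exact sum_eq_zero fun i _ => hsupp _ fun h => hj (mem_image_of_mem Prod.snd h)
  have hrowsum_ne (i : ι) (hi : i ≠ i₀) : ∑ j, D (i, j) = 0 := by
    by_cases hiI : i ∈ s.image Prod.fst
    · exact hI i (mem_erase.2 ⟨hi, hiI⟩)
    · exact sum_eq_zero fun j _ => hsupp _ fun h => hiI (mem_image_of_mem Prod.fst h)
  have hrowsum_i₀ : ∑ j, D (i₀, j) = 0 := calc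
    ∑ j, D (i₀, j) = ∑ i, ∑ j, D (i, j) := (Fintype.sum_eq_single i₀ hrowsum_ne).symm
    _ = ∑ j, ∑ i, D (i, j) := sum_comm
    _ = 0 := sum_eq_zero fun j _ => hcolsum j
  refine ⟨D, hD, fun x hx => by_contra fun hxs => hx (hsupp x hxs), fun i => ?_, hcolsum⟩
  obtain rfl | hi := eq_or_ne i i₀
  exacts [hrowsum_i₀, hrowsum_ne i hi]

end ZeroLineSums

section Rounding

variable {K : Type*} [Field K] [LinearOrder K] [IsStrictOrderedRing K]

theorem add_mul_mem_Icc_of_le {a d t u l r : K} (ha : a ∈ Set.Icc l r)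
    (ht : a + t * d ∈ Set.Icc l r) (hu : 0 ≤ u) (hut : u ≤ t) : a + u * d ∈ Set.Icc l r := by
  obtain hd | hd := le_total 0 d
  · exact ⟨ha.1.trans (le_add_of_nonneg_right (mul_nonneg hu hd)), ht.2.trans' (by gcongr)⟩
  · exact ⟨ht.1.trans (add_le_add_right (mul_le_mul_of_nonpos_right hut hd) a),
      ha.2.trans' (add_le_of_nonpos_right (mul_nonpos_of_nonneg_of_nonpos hu hd))⟩

variable [FloorRing K]

theorem exists_pos_add_mul_eq_floor_or_ceil {a d : K} (ha : ¬ ∃ z : ℤ, a = z) (hd : d ≠ 0) :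
    ∃ t > 0, a + t * d = ⌊a⌋ ∨ a + t * d = ⌈a⌉ := by
  have hfloor : (⌊a⌋ : K) < a := (Int.floor_le a).lt_of_ne fun h => ha ⟨_, h.symm⟩
  have hceil : a < ⌈a⌉ := (Int.le_ceil a).lt_of_ne fun h => ha ⟨_, h⟩
  obtain hd_neg | hd_pos := hd.lt_or_gt
  · exact ⟨(⌊a⌋ - a) / d, div_pos_of_neg_of_neg (sub_neg.2 hfloor) hd_neg,
      .inl (by rw [div_mul_cancel₀ _ hd, add_sub_cancel])⟩
  · exact ⟨(⌈a⌉ - a) / d, div_pos (sub_pos.2 hceil) hd_pos,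
      .inr (by rw [div_mul_cancel₀ _ hd, add_sub_cancel])⟩

theorem exists_pos_fractionalSupport_add_ssubset {α : Type*} [Finite α] {f d : α → K} (hd : d ≠ 0)
    (hsupp : d.support ⊆ fractionalSupport f) :
    ∃ t > 0, (∀ a, f a + t * d a ∈ Set.Icc (⌊f a⌋ : K) ⌈f a⌉) ∧
      fractionalSupport (fun a => f a + t * d a) ⊂ fractionalSupport f := by
  have hfloor_ceil (a : α) : f a ∈ Set.Icc (⌊f a⌋ : K) ⌈f a⌉ := ⟨Int.floor_le _, Int.le_ceil _⟩
  have hreach (a : α) (ha : a ∈ d.support) := exists_pos_add_mul_eq_floor_or_ceil (hsupp ha) ha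
  choose! τ hτ_pos hτ using hreach
  obtain ⟨a₀, ha₀, hmin⟩ :=
    d.support.toFinite.exists_minimalFor τ _ (Function.support_nonempty_iff.2 hd)
  refine ⟨τ a₀, hτ_pos a₀ ha₀, fun a => ?_, (Set.ssubset_iff_of_subset ?_).2 ⟨a₀, hsupp ha₀, ?_⟩⟩
  · by_cases ha : d a = 0
    · simpa only [ha, mul_zero, add_zero] using hfloor_ceil a
    · have hreach_mem : f a + τ a * d a ∈ Set.Icc (⌊f a⌋ : K) ⌈f a⌉ := by
        obtain h | h := hτ a ha <;> rw [h]
        exacts [Set.left_mem_Icc.2 ((hfloor_ceil a).1.trans (hfloor_ceil a).2),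
          Set.right_mem_Icc.2 ((hfloor_ceil a).1.trans (hfloor_ceil a).2)]
      exact add_mul_mem_Icc_of_le (hfloor_ceil a) hreach_mem (hτ_pos a₀ ha₀).le
        ((le_total _ _).elim id (hmin ha))
  · intro a ha
    by_cases hda : d a = 0
    · simpa only [fractionalSupport, Set.mem_ofPred_eq, hda, mul_zero, add_zero] using ha
    · exact hsupp hda
  · exact fun h => h ((hτ a₀ ha₀).elim (⟨_, ·⟩) (⟨_, ·⟩))

theorem decomposition_step_general {ι κ : Type*} [Fintype ι] [Fintype κ] (A : ι → κ → K)
    (hrow : ∀ i, ¬ ∃! j, j ∈ fractionalSupport (A i))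
    (hcol : ∀ j, ¬ ∃! i, i ∈ fractionalSupport fun i => A i j)
    (hfrac : ∃ i, (fractionalSupport (A i)).Nonempty) :
    ∃ (β : K) (B C : ι → κ → K),
      0 < β ∧ β < 1 ∧
      (∀ i j, A i j = β * B i j + (1 - β) * C i j) ∧
      (∀ i, ∑ j, B i j = ∑ j, A i j) ∧ (∀ i, ∑ j, C i j = ∑ j, A i j) ∧
      (∀ j, ∑ i, B i j = ∑ i, A i j) ∧ (∀ j, ∑ i, C i j = ∑ i, A i j) ∧
      (∀ i j, (⌊A i j⌋ : K) ≤ B i j ∧ B i j ≤ (⌈A i j⌉ : K)) ∧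
      (∀ i j, (⌊A i j⌋ : K) ≤ C i j ∧ C i j ≤ (⌈A i j⌉ : K)) ∧
      (fractionalSupport (Function.uncurry B)).ncard
        < (fractionalSupport (Function.uncurry A)).ncard ∧
      (fractionalSupport (Function.uncurry C)).ncard
        < (fractionalSupport (Function.uncurry A)).ncard := by
  obtain ⟨i₀, j₀, h₀⟩ := hfrac
  obtain ⟨D, hD, hsupp, hDrow, hDcol⟩ :=
    exists_ne_zero_line_sums_eq_zero K (s := fractionalSupport (Function.uncurry A))
      ⟨(i₀, j₀), h₀⟩ hrow hcol
  obtain ⟨t, ht, hB, hBA⟩ := exists_pos_fractionalSupport_add_ssubset hD hsupp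
  obtain ⟨u, hu, hC, hCA⟩ := exists_pos_fractionalSupport_add_ssubset (d := -D)
    (neg_ne_zero.2 hD) ((Function.support_neg D).trans_subset hsupp)
  have hrowsum (c : K) (i : ι) : ∑ j, (A i j + c * D (i, j)) = ∑ j, A i j := by
    rw [sum_add_distrib, ← mul_sum, hDrow, mul_zero, add_zero]
  have hcolsum (c : K) (j : κ) : ∑ i, (A i j + c * D (i, j)) = ∑ i, A i j := by
    rw [sum_add_distrib, ← mul_sum, hDcol, mul_zero, add_zero]
  simp only [Pi.neg_apply, mul_neg, ← neg_mul] at hC hCA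
  refine ⟨u / (t + u), fun i j => A i j + t * D (i, j), fun i j => A i j + -u * D (i, j),
    by positivity, (div_lt_one (by positivity)).2 (lt_add_of_pos_left u ht), fun i j => ?_,
    hrowsum t, hrowsum (-u), hcolsum t, hcolsum (-u), fun i j => hB (i, j), fun i j => hC (i, j),
    Set.ncard_lt_ncard hBA, Set.ncard_lt_ncard hCA⟩
  field_simp
  ring

end Rounding

/-- Decomposition step of the cycle-adjustment rounding
algorithm: a real matrix with integer row and column sums and at least one
non-integer entry is a convex combination of two matrices with the same row and
column sums, entrywise between the floors and ceilings of the original entries,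
each having strictly fewer non-integer entries. -/
theorem decomposition_step
    (m n : ℕ) (A : Fin m → Fin n → ℝ)
    (hrow : ∀ i, ∃ z : ℤ, ∑ j, A i j = z)
    (hcol : ∀ j, ∃ z : ℤ, ∑ i, A i j = z)
    (hfrac : ∃ i j, ¬ ∃ z : ℤ, A i j = z) :
    ∃ (β : ℝ) (B C : Fin m → Fin n → ℝ),
      0 < β ∧ β < 1 ∧
      (∀ i j, A i j = β * B i j + (1 - β) * C i j) ∧
      (∀ i, ∑ j, B i j = ∑ j, A i j) ∧ (∀ i, ∑ j, C i j = ∑ j, A i j) ∧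
      (∀ j, ∑ i, B i j = ∑ i, A i j) ∧ (∀ j, ∑ i, C i j = ∑ i, A i j) ∧
      (∀ i j, (⌊A i j⌋ : ℝ) ≤ B i j ∧ B i j ≤ (⌈A i j⌉ : ℝ)) ∧
      (∀ i j, (⌊A i j⌋ : ℝ) ≤ C i j ∧ C i j ≤ (⌈A i j⌉ : ℝ)) ∧
      {x : Fin m × Fin n | ¬ ∃ z : ℤ, B x.1 x.2 = z}.ncard
        < {x : Fin m × Fin n | ¬ ∃ z : ℤ, A x.1 x.2 = z}.ncard ∧
      {x : Fin m × Fin n | ¬ ∃ z : ℤ, C x.1 x.2 = z}.ncard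
        < {x : Fin m × Fin n | ¬ ∃ z : ℤ, A x.1 x.2 = z}.ncard :=
  decomposition_step_general A (fun i => not_existsUnique_mem_fractionalSupport (hrow i))
    (fun j => not_existsUnique_mem_fractionalSupport (hcol j)) hfrac
end

section
/- Consider reservation problems with m = 3 departments, n = 2 categories and reservation scheme α = (1/2, 1/2), over the infinite horizon. There is no deterministic solution that stays within quota: for every deterministic solution R there exist a finite vacancy sequence (q^1,…,q^t) and a period t such that either some internal entry of R's period-t reservation table lies outside {⌊α_j Q_i^t⌋, ⌈α_j Q_i^t⌉}, or some column total lies outside {⌊α_j ∑_{i∈D} Q_i^t⌋, ⌈α_j ∑_{i∈D} Q_i^t⌉}. -/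
open Finset

/-!
Give one vacancy to each department of a set `S` of odd size `#S > 1`, then one more to a single
`k ∈ S`.
Department `k` and the whole university now have even numbers of vacancies, so a category with
share `1 / 2` has no room for rounding there, and the tables of the other departments are still
those of the first period. Hence, whichever `k` is removed, the other departments of `S` together
gave the category exactly `(#S - 1) / 2` of their first vacancies. Summing over `k`, all of `S` gave
it `#S / 2`, which is not an integer.
-/

/-- The natural number `z` is a rounding, down or up, of the fair share `x`. This is the quota
condition both for an internal entry and for a column total. -/
def WithinQuota (x : ℝ) (z : ℕ) : Prop :=
  (z : ℤ) = ⌊x⌋ ∨ (z : ℤ) = ⌈x⌉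

lemma WithinQuota.two_mul_eq {n z : ℕ} (h : WithinQuota (1 / 2 * (n : ℝ)) z) (hn : Even n) :
    2 * z = n := by
  obtain ⟨c, rfl⟩ := hn
  have share_eq : 1 / 2 * ((c + c : ℕ) : ℝ) = (c : ℝ) := by push_cast; ring
  rw [WithinQuota, share_eq, Int.floor_natCast, Int.ceil_natCast, or_self, Nat.cast_inj] at h
  omega

lemma even_card_of_two_mul_sum_erase {ι : Type*} [DecidableEq ι] {S : Finset ι} {z : ι → ℕ}
    (hS : S.Nontrivial) (h : ∀ k ∈ S, 2 * ∑ i ∈ S.erase k, z i + 1 = #S) : Even #S := by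
  have restore : ∀ k ∈ S, 2 * ∑ i ∈ S, z i + 1 = #S + 2 * z k := fun k hk => by
    rw [← h k hk, ← add_sum_erase S z hk]
    ring
  have double_count : #S * (2 * ∑ i ∈ S, z i + 1) = #S * #S + 2 * ∑ i ∈ S, z i := by
    simpa only [sum_const, sum_add_distrib, ← mul_sum, smul_eq_mul] using sum_congr rfl restore
  obtain ⟨n, hn⟩ : ∃ n, #S = n + 1 + 1 := Nat.exists_eq_add_of_le' (one_lt_card_iff_nontrivial.2 hS)
  have two_mul_sum : 2 * ∑ i ∈ S, z i = #S := by
    refine Nat.eq_of_mul_eq_mul_left n.succ_pos ?_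
    rw [hn] at double_count ⊢
    linarith
  exact ⟨_, two_mul_sum.symm.trans (two_mul _)⟩

section Solutions

variable {D C : Type*} [Fintype C]

/-- `R` is a deterministic solution over the infinite horizon: `R t q` is the reservation table
assigned to the vacancy sequence `q` of length `t`. Periods are indexed from `0`, so the last one
is `Fin.last` and `Fin.castSucc` embeds the earlier ones. -/
structure IsDeterministicSolution (R : (t : ℕ) → (Fin t → D → ℕ) → D → C → ℕ) : Prop where
  sum_row : ∀ (t : ℕ) (q : Fin t → D → ℕ) (i : D), ∑ j, R t q i j = ∑ s, q s i
  mono : ∀ (t : ℕ) (q : Fin (t + 1) → D → ℕ) (i : D) (j : C),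
    R t (fun s => q s.castSucc) i j ≤ R (t + 1) q i j

namespace IsDeterministicSolution

variable {R : (t : ℕ) → (Fin t → D → ℕ) → D → C → ℕ}

lemma eq_zero_of_sum_eq_zero (hR : IsDeterministicSolution R) {t : ℕ} {q : Fin t → D → ℕ} {i : D}
    (hi : ∑ s, q s i = 0) (j : C) : R t q i j = 0 :=
  sum_eq_zero_iff.1 ((hR.sum_row t q i).trans hi) j (mem_univ j)

lemma succ_eq_of_last_eq_zero (hR : IsDeterministicSolution R) {t : ℕ}
    {q : Fin (t + 1) → D → ℕ} {i : D} (hi : q (Fin.last t) i = 0) (j : C) :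
    R (t + 1) q i j = R t (fun s => q s.castSucc) i j := by
  have row_sum_eq : ∑ j, R t (fun s => q s.castSucc) i j = ∑ j, R (t + 1) q i j := by
    rw [hR.sum_row, hR.sum_row, Fin.sum_univ_castSucc, hi, add_zero]
  exact ((sum_eq_sum_iff_of_le fun j _ => hR.mono t q i j).1 row_sum_eq j (mem_univ j)).symm

end IsDeterministicSolution

end Solutions

section Vacancies

variable {D : Type*} [DecidableEq D]

/-- The vacancy vector with one vacancy in each department of `S`. -/
def oneEach (S : Finset D) : D → ℕ :=
  fun i => if i ∈ S then 1 else 0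

/-- The two-period vacancy sequence opening one vacancy in each department of `S` and then one
more in department `k`. -/
def oneEachThenExtra (S : Finset D) (k : D) : Fin 2 → D → ℕ :=
  ![oneEach S, Pi.single k 1]

lemma oneEachThenExtra_castSucc (S : Finset D) (k : D) :
    (fun s : Fin 1 => oneEachThenExtra S k s.castSucc) = fun _ => oneEach S := by
  funext s
  rw [Subsingleton.elim s 0]
  rfl

lemma sum_oneEachThenExtra (S : Finset D) (k i : D) :
    ∑ s, oneEachThenExtra S k s i = (if i ∈ S then 1 else 0) + if i = k then 1 else 0 := by
  rw [Fin.sum_univ_two, ← Pi.single_apply]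
  rfl

lemma sum_sum_oneEachThenExtra [Fintype D] (S : Finset D) (k : D) :
    ∑ i, ∑ s, oneEachThenExtra S k s i = #S + 1 := by
  simp only [sum_oneEachThenExtra, sum_add_distrib, sum_boole, filter_univ_mem, filter_eq',
    mem_univ, if_true, card_singleton, Nat.cast_id]

end Vacancies

lemma IsDeterministicSolution.two_mul_sum_erase {D C : Type*} [Fintype D] [DecidableEq D]
    [Fintype C] {R : (t : ℕ) → (Fin t → D → ℕ) → D → C → ℕ} (hR : IsDeterministicSolution R)
    {S : Finset D} (hS : Odd #S) {k : D} (hk : k ∈ S) {j : C}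
    (hentry : WithinQuota (1 / 2 * ((∑ s, oneEachThenExtra S k s k : ℕ) : ℝ))
      (R 2 (oneEachThenExtra S k) k j))
    (hcol : WithinQuota (1 / 2 * ((∑ i, ∑ s, oneEachThenExtra S k s i : ℕ) : ℝ))
      (∑ i, R 2 (oneEachThenExtra S k) i j)) :
    2 * ∑ i ∈ S.erase k, R 1 (fun _ => oneEach S) i j + 1 = #S := by
  have sum_k : ∑ s, oneEachThenExtra S k s k = 2 := by
    rw [sum_oneEachThenExtra, if_pos hk, if_pos rfl]
  rw [sum_k] at hentry
  rw [sum_sum_oneEachThenExtra] at hcol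
  have two_mul_entry := hentry.two_mul_eq even_two
  have two_mul_col := hcol.two_mul_eq hS.add_one
  have unchanged : ∀ i ∈ S.erase k,
      R 2 (oneEachThenExtra S k) i j = R 1 (fun _ => oneEach S) i j := fun i hi => by
    have no_extra : oneEachThenExtra S k (Fin.last 1) i = 0 :=
      Pi.single_eq_of_ne (ne_of_mem_erase hi) 1
    rw [hR.succ_eq_of_last_eq_zero no_extra, oneEachThenExtra_castSucc]
  have zero_outside : ∀ i ∉ S, R 2 (oneEachThenExtra S k) i j = 0 := fun i hi =>
    hR.eq_zero_of_sum_eq_zero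
      (by rw [sum_oneEachThenExtra, if_neg hi, if_neg (ne_of_mem_of_not_mem hk hi).symm]) j
  rw [← sum_subset (subset_univ S) fun i _ => zero_outside i, ← add_sum_erase S _ hk,
    sum_congr rfl unchanged] at two_mul_col
  omega

theorem no_deterministic_solution_within_quota_general {D C : Type*} [Fintype D] [Fintype C]
    (hD : 3 ≤ Fintype.card D) {R : (t : ℕ) → (Fin t → D → ℕ) → D → C → ℕ}
    (hR : IsDeterministicSolution R) (j : C) :
    ∃ q : Fin 2 → D → ℕ,
      (∃ i, ¬ WithinQuota (1 / 2 * ((∑ s, q s i : ℕ) : ℝ)) (R 2 q i j)) ∨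
        ¬ WithinQuota (1 / 2 * ((∑ i, ∑ s, q s i : ℕ) : ℝ)) (∑ i, R 2 q i j) := by
  classical
  by_contra! within
  obtain ⟨S, -, hS⟩ := exists_subset_card_eq (s := (univ : Finset D)) hD
  have hodd : Odd #S := hS ▸ by decide
  have hnontrivial : S.Nontrivial := one_lt_card_iff_nontrivial.1 (by omega)
  have heven : Even #S := even_card_of_two_mul_sum_erase hnontrivial fun k hk =>
    let ⟨entries, column⟩ := within (oneEachThenExtra S k)
    hR.two_mul_sum_erase hodd hk (entries k) column
  exact Nat.not_even_iff_odd.2 hodd heven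

/-- With m = 3 departments, n = 2 categories and reservation
scheme α = (1/2, 1/2), no deterministic solution over the infinite horizon stays
within quota: for every deterministic solution (assigning to each finite vacancy
sequence a reservation table, monotonically) there is a vacancy sequence and a
period at which some internal entry or some column total lies outside the floor
and ceiling of its fair share. -/
theorem no_deterministic_solution_within_quota
    (R : (t : ℕ) → (Fin t → Fin 3 → ℕ) → Fin 3 → Fin 2 → ℕ)
    (hrow : ∀ (t : ℕ) (q : Fin t → Fin 3 → ℕ) (i : Fin 3),
      ∑ j, R t q i j = ∑ s, q s i)
    (hmono : ∀ (t : ℕ) (q : Fin (t + 1) → Fin 3 → ℕ) (i : Fin 3) (j : Fin 2),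
      R t (fun s => q s.castSucc) i j ≤ R (t + 1) q i j) :
    ∃ (t : ℕ) (q : Fin t → Fin 3 → ℕ), 1 ≤ t ∧
      ((∃ (i : Fin 3) (j : Fin 2),
          ¬ ((R t q i j : ℤ) = ⌊(1 / 2 : ℝ) * ((∑ s, q s i : ℕ) : ℝ)⌋ ∨
             (R t q i j : ℤ) = ⌈(1 / 2 : ℝ) * ((∑ s, q s i : ℕ) : ℝ)⌉)) ∨
       (∃ j : Fin 2,
          ¬ (((∑ i, R t q i j : ℕ) : ℤ) = ⌊(1 / 2 : ℝ) * ((∑ i, ∑ s, q s i : ℕ) : ℝ)⌋ ∨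
             ((∑ i, R t q i j : ℕ) : ℤ) = ⌈(1 / 2 : ℝ) * ((∑ i, ∑ s, q s i : ℕ) : ℝ)⌉))) :=
  let ⟨q, h⟩ := no_deterministic_solution_within_quota_general (by simp) ⟨hrow, hmono⟩ 0
  ⟨2, q, one_le_two, h.imp (fun ⟨i, hi⟩ => ⟨i, 0, hi⟩) fun hcol => ⟨0, hcol⟩⟩
end

section
/- Consider reservation problems with m = 3 departments, n = 2 categories and reservation scheme α = (1/2, 1/2), over the infinite horizon. For every deterministic solution R that stays within university quota and every constant b > 0, there exist a finite vacancy sequence (q^1,…,q^t), a period t, a department i and a category j such that the bias |z_{ij} − α_j·Q_i^t| > b, where z_{ij} is the corresponding entry of R's period-t reservation table. In other words, no deterministic solution can both have a finite bias and stay within university quota. -/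
open Finset

/-! Take a category `j` whose share `α = p / L` is rational and three departments `d`, `e`, `f`.
Whenever the cumulative number of vacancies in the university is a multiple of `L`, the quota
determines column `j` exactly. So once `L - 1` further vacancies have been announced in `f`, it
is already decided whether the next vacancy goes to `j`, before its department is known. The
adversary announces it in `d` if it goes to `j`, and in `e` otherwise. After `N` such rounds all
vacancies of `d` and none of those of `e` belong to `j`, and the two departments share `N`
vacancies; hence the bias of one of them in category `j` is at least `α * (1 - α) * N` in absolute
value. -/

variable {D C : Type*} {t : ℕ}

/-- An assignment of a table to every finite vacancy sequence; `R t q i j` is the number of posts of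
department `i` reserved for category `j` in period `t`. -/
abbrev ReservationRule (D C : Type*) := (t : ℕ) → (Fin t → D → ℕ) → D → C → ℕ

/-- The cumulative vacancy count `Q_i^t` of department `i`. -/
def cumulativeVacancies (q : Fin t → D → ℕ) (i : D) : ℕ := ∑ s, q s i

/-- A deterministic solution over the infinite horizon: rows sum to the cumulative vacancy counts,
and reservations are never revoked. -/
structure IsDeterministicSolution_s5 [Fintype C] (R : ReservationRule D C) : Prop where
  row_sum (t : ℕ) (q : Fin t → D → ℕ) (i : D) : ∑ j, R t q i j = cumulativeVacancies q i
  mono (t : ℕ) (q : Fin (t + 1) → D → ℕ) (i : D) (j : C) :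
    R t (fun s => q s.castSucc) i j ≤ R (t + 1) q i j

/-- The university quota for the single category `j`, whose share in the reservation scheme is `α`;
a solution stays within university quota if this holds for every category. -/
def IsWithinUniversityQuota [Fintype D] (R : ReservationRule D C) (α : ℝ) (j : C) : Prop :=
  ∀ (t : ℕ) (q : Fin t → D → ℕ),
    ((∑ i, R t q i j : ℕ) : ℤ) = ⌊α * ((∑ i, cumulativeVacancies q i : ℕ) : ℝ)⌋ ∨
    ((∑ i, R t q i j : ℕ) : ℤ) = ⌈α * ((∑ i, cumulativeVacancies q i : ℕ) : ℝ)⌉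

/-- The bias of `R` at department `i` and category `j`, where `α` is the share of `j`. -/
def bias (R : ReservationRule D C) (α : ℝ) (q : Fin t → D → ℕ) (i : D) (j : C) : ℝ :=
  R t q i j - α * cumulativeVacancies q i

/-- The vacancy sequences the adversary aims at: all posts of department `d`, and none of those of
department `e`, are reserved for category `j`. -/
structure IsSeparating (R : ReservationRule D C) (j : C) (d e : D) (q : Fin t → D → ℕ) : Prop where
  apply_left : R t q d j = cumulativeVacancies q d
  apply_right : R t q e j = 0

@[simp]
lemma cumulativeVacancies_snoc (q : Fin t → D → ℕ) (v : D → ℕ) (i : D) :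
    cumulativeVacancies (Fin.snoc q v : Fin (t + 1) → D → ℕ) i = cumulativeVacancies q i + v i := by
  simp [cumulativeVacancies, Fin.sum_univ_castSucc]

lemma sum_cumulativeVacancies_snoc_single [Fintype D] [DecidableEq D] (q : Fin t → D → ℕ) (k : D)
    (n : ℕ) :
    ∑ i, cumulativeVacancies (Fin.snoc q (Pi.single k n) : Fin (t + 1) → D → ℕ) i =
      ∑ i, cumulativeVacancies q i + n := by
  simp [sum_add_distrib]

namespace IsDeterministicSolution_s5

variable [Fintype C] {R : ReservationRule D C}

lemma le_apply_snoc (hR : IsDeterministicSolution_s5 R) (q : Fin t → D → ℕ) (v : D → ℕ) (i : D)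
    (j : C) : R t q i j ≤ R (t + 1) (Fin.snoc q v) i j := by
  simpa using hR.mono t (Fin.snoc q v) i j

lemma apply_snoc_le (hR : IsDeterministicSolution_s5 R) (q : Fin t → D → ℕ) (v : D → ℕ) (i : D)
    (j : C) : R (t + 1) (Fin.snoc q v) i j ≤ R t q i j + v i := by
  classical
  have hrow : ∑ j, R (t + 1) (Fin.snoc q v) i j = ∑ j, R t q i j + v i := by
    rw [hR.row_sum, hR.row_sum, cumulativeVacancies_snoc]
  have hothers : ∑ l ∈ univ.erase j, R t q i l ≤
      ∑ l ∈ univ.erase j, R (t + 1) (Fin.snoc q v) i l :=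
    sum_le_sum fun l _ => hR.le_apply_snoc q v i l
  rw [← add_sum_erase _ _ (mem_univ j), ← add_sum_erase _ _ (mem_univ j)] at hrow
  omega

lemma apply_snoc_of_eq_zero (hR : IsDeterministicSolution_s5 R) (q : Fin t → D → ℕ) {v : D → ℕ}
    {i : D} (hv : v i = 0) (j : C) : R (t + 1) (Fin.snoc q v) i j = R t q i j :=
  le_antisymm (by simpa [hv] using hR.apply_snoc_le q v i j) (hR.le_apply_snoc q v i j)

lemma column_sum_snoc_single [Fintype D] [DecidableEq D] (hR : IsDeterministicSolution_s5 R)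
    (q : Fin t → D → ℕ) (k : D) (n : ℕ) (j : C) :
    ∑ i, R (t + 1) (Fin.snoc q (Pi.single k n)) i j + R t q k j =
      ∑ i, R t q i j + R (t + 1) (Fin.snoc q (Pi.single k n)) k j := by
  have hothers : ∑ i ∈ univ.erase k, R (t + 1) (Fin.snoc q (Pi.single k n)) i j =
      ∑ i ∈ univ.erase k, R t q i j :=
    sum_congr rfl fun i hi =>
      hR.apply_snoc_of_eq_zero q (Pi.single_eq_of_ne (ne_of_mem_erase hi) n) j
  rw [← add_sum_erase _ _ (mem_univ k), ← add_sum_erase _ (fun i => R t q i j) (mem_univ k),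
    hothers]
  ring

lemma apply_eq_zero_of_period_zero (hR : IsDeterministicSolution_s5 R) (q : Fin 0 → D → ℕ) (i : D)
    (j : C) : R 0 q i j = 0 := by
  have hrow : ∑ j, R 0 q i j = 0 := hR.row_sum 0 q i
  exact sum_eq_zero_iff.mp hrow j (mem_univ j)

end IsDeterministicSolution_s5

lemma IsWithinUniversityQuota.column_sum_eq [Fintype D] {R : ReservationRule D C} {r : ℚ} {j : C}
    (hj : IsWithinUniversityQuota R r j) {q : Fin t → D → ℕ} {N : ℕ}
    (hq : ∑ i, cumulativeVacancies q i = r.den * N) :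
    ((∑ i, R t q i j : ℕ) : ℤ) = r.num * N := by
  have hshare : (r : ℝ) * ((r.den * N : ℕ) : ℝ) = ((r.num * N : ℤ) : ℝ) := by
    have hden : (r : ℝ) * r.den = r.num := mod_cast r.mul_den_eq_num
    push_cast
    rw [← mul_assoc, hden]
  simpa only [hq, hshare, Int.floor_intCast, Int.ceil_intCast, or_self] using hj t q

namespace IsSeparating

variable {R : ReservationRule D C} {j : C} {d e : D} {q : Fin t → D → ℕ}

lemma exists_mul_le_abs_bias {α : ℝ} (h₀ : 0 ≤ α) (h₁ : α ≤ 1) (hq : IsSeparating R j d e q) :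
    ∃ i, α * (1 - α) * (cumulativeVacancies q d + cumulativeVacancies q e : ℕ) ≤
      |bias R α q i j| := by
  have hd : |bias R α q d j| = (1 - α) * cumulativeVacancies q d := by
    rw [bias, hq.apply_left, ← one_sub_mul, abs_of_nonneg]
    exact mul_nonneg (sub_nonneg.mpr h₁) (Nat.cast_nonneg _)
  have he : |bias R α q e j| = α * cumulativeVacancies q e := by
    rw [bias, hq.apply_right, Nat.cast_zero, zero_sub, abs_neg, abs_of_nonneg]
    exact mul_nonneg h₀ (Nat.cast_nonneg _)
  have hmax : α * (1 - α) * (cumulativeVacancies q d + cumulativeVacancies q e : ℕ) ≤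
      max |bias R α q d j| |bias R α q e j| := by
    calc α * (1 - α) * (cumulativeVacancies q d + cumulativeVacancies q e : ℕ)
        = α • |bias R α q d j| + (1 - α) • |bias R α q e j| := by
          rw [hd, he, smul_eq_mul, smul_eq_mul]
          push_cast
          ring
      _ ≤ max |bias R α q d j| |bias R α q e j| :=
          Convex.combo_le_max _ _ h₀ (sub_nonneg.mpr h₁) (add_sub_cancel α 1)
  rcases le_max_iff.mp hmax with h | h
  exacts [⟨d, h⟩, ⟨e, h⟩]

variable [Fintype C]

lemma snoc_of_eq_zero (hR : IsDeterministicSolution_s5 R) (hq : IsSeparating R j d e q) {v : D → ℕ}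
    (hd : v d = 0) (he : v e = 0) :
    IsSeparating R j d e (Fin.snoc q v : Fin (t + 1) → D → ℕ) where
  apply_left := by
    rw [hR.apply_snoc_of_eq_zero q hd, hq.apply_left, cumulativeVacancies_snoc, hd, add_zero]
  apply_right := by rw [hR.apply_snoc_of_eq_zero q he, hq.apply_right]

lemma exists_snoc_single [Fintype D] [DecidableEq D] {r : ℚ} {N : ℕ}
    (hR : IsDeterministicSolution_s5 R) (hj : IsWithinUniversityQuota R r j) (hde : d ≠ e)
    (htotal : ∑ i, cumulativeVacancies q i + 1 = r.den * N) (hq : IsSeparating R j d e q) :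
    ∃ k, (k = d ∨ k = e) ∧
      IsSeparating R j d e (Fin.snoc q (Pi.single k 1) : Fin (t + 1) → D → ℕ) := by
  have hcolumn (k : D) := hj.column_sum_eq
    ((sum_cumulativeVacancies_snoc_single q k 1).trans htotal)
  have hforced : ∑ i, R (t + 1) (Fin.snoc q (Pi.single d 1)) i j =
      ∑ i, R (t + 1) (Fin.snoc q (Pi.single e 1)) i j :=
    Nat.cast_injective ((hcolumn d).trans (hcolumn e).symm)
  have hsum_d := hR.column_sum_snoc_single q d 1 j
  have hsum_e := hR.column_sum_snoc_single q e 1 j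
  have hlower := hR.le_apply_snoc q (Pi.single d 1) d j
  have hupper : R (t + 1) (Fin.snoc q (Pi.single d 1)) d j ≤ R t q d j + 1 := by
    simpa using hR.apply_snoc_le q (Pi.single d 1) d j
  obtain hgain | hsame : R (t + 1) (Fin.snoc q (Pi.single d 1)) d j = R t q d j + 1 ∨
      R (t + 1) (Fin.snoc q (Pi.single d 1)) d j = R t q d j := by omega
  · refine ⟨d, .inl rfl, ?_, ?_⟩
    · rw [hgain, hq.apply_left, cumulativeVacancies_snoc, Pi.single_eq_same]
    · rw [hR.apply_snoc_of_eq_zero q (Pi.single_eq_of_ne hde.symm 1), hq.apply_right]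
  · refine ⟨e, .inr rfl, ?_, ?_⟩
    · have hd : (Pi.single e 1 : D → ℕ) d = 0 := Pi.single_eq_of_ne hde 1
      rw [hR.apply_snoc_of_eq_zero q hd, hq.apply_left, cumulativeVacancies_snoc, hd, add_zero]
    · have hzero := hq.apply_right
      omega

end IsSeparating

lemma exists_isSeparating [Fintype D] [Fintype C] {R : ReservationRule D C} {r : ℚ} {j : C}
    {d e f : D} (hR : IsDeterministicSolution_s5 R) (hj : IsWithinUniversityQuota R r j) (hde : d ≠ e)
    (hdf : d ≠ f) (hef : e ≠ f) (N : ℕ) :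
    ∃ (t : ℕ) (q : Fin t → D → ℕ), IsSeparating R j d e q ∧
      ∑ i, cumulativeVacancies q i = r.den * N ∧
      cumulativeVacancies q d + cumulativeVacancies q e = N := by
  classical
  induction N with
  | zero =>
    refine ⟨0, Fin.elim0, ⟨?_, ?_⟩, ?_, ?_⟩ <;>
      simp [hR.apply_eq_zero_of_period_zero, cumulativeVacancies]
  | succ N ih =>
    obtain ⟨t, q, hq, htotal, hcount⟩ := ih
    set q' : Fin (t + 1) → D → ℕ := Fin.snoc q (Pi.single f (r.den - 1)) with hq'_def
    have hq' : IsSeparating R j d e q' :=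
      hq.snoc_of_eq_zero hR (Pi.single_eq_of_ne hdf _) (Pi.single_eq_of_ne hef _)
    have htotal' : ∑ i, cumulativeVacancies q' i + 1 = r.den * (N + 1) := by
      rw [sum_cumulativeVacancies_snoc_single, htotal, mul_add_one, add_assoc,
        Nat.sub_add_cancel r.den_pos]
    have hcount' : cumulativeVacancies q' d + cumulativeVacancies q' e = N := by
      simpa [hq'_def, hdf, hef] using hcount
    obtain ⟨k, hk, hq''⟩ := hq'.exists_snoc_single hR hj hde htotal'
    refine ⟨t + 2, Fin.snoc q' (Pi.single k 1), hq'', ?_, ?_⟩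
    · rw [sum_cumulativeVacancies_snoc_single, htotal']
    · rcases hk with rfl | rfl
      · rw [cumulativeVacancies_snoc q', cumulativeVacancies_snoc q', Pi.single_eq_same,
          Pi.single_eq_of_ne hde.symm, add_zero, add_right_comm, hcount']
      · rw [cumulativeVacancies_snoc q', cumulativeVacancies_snoc q', Pi.single_eq_same,
          Pi.single_eq_of_ne hde, add_zero, ← add_assoc, hcount']

theorem university_quota_implies_unbounded_bias_general [Fintype D] [Fintype C]
    (hD : 2 < Fintype.card D) {R : ReservationRule D C} (hR : IsDeterministicSolution_s5 R) {α : ℝ}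
    (hα : ¬Irrational α) (h₀ : 0 < α) (h₁ : α < 1) {j : C} (hj : IsWithinUniversityQuota R α j)
    (b : ℝ) :
    ∃ (t : ℕ) (q : Fin t → D → ℕ) (i : D), 1 ≤ t ∧ b < |bias R α q i j| := by
  obtain ⟨r, rfl⟩ := not_not.mp hα
  obtain ⟨d, e, f, hde, hdf, hef⟩ := Fintype.two_lt_card_iff.mp hD
  obtain ⟨N, hN⟩ := exists_nat_gt (b / (r * (1 - r)))
  obtain ⟨t, q, hq, -, hcount⟩ := exists_isSeparating hR hj hde hdf hef (N + 1)
  obtain ⟨i, hi⟩ := hq.exists_mul_le_abs_bias h₀.le h₁.le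
  have ht : t ≠ 0 := by
    rintro rfl
    simp [cumulativeVacancies] at hcount
  have hscale : (0 : ℝ) < r * (1 - r) := mul_pos h₀ (sub_pos.mpr h₁)
  refine ⟨t, q, i, Nat.one_le_iff_ne_zero.mpr ht, ?_⟩
  calc b < r * (1 - r) * N := (div_lt_iff₀' hscale).mp hN
    _ ≤ r * (1 - r) * (N + 1 : ℕ) := by gcongr; exact N.le_succ
    _ ≤ |bias R r q i j| := hcount ▸ hi

/-- With m = 3 departments, n = 2 categories and reservation
scheme α = (1/2, 1/2), every deterministic solution over the infinite horizon
that stays within university quota fails to have a finite bias: for every b > 0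
there are a vacancy sequence, a period, a department and a category at which the
reservation table entry deviates from the fair share by more than b. -/
theorem university_quota_implies_unbounded_bias
    (R : (t : ℕ) → (Fin t → Fin 3 → ℕ) → Fin 3 → Fin 2 → ℕ)
    (hrow : ∀ (t : ℕ) (q : Fin t → Fin 3 → ℕ) (i : Fin 3),
      ∑ j, R t q i j = ∑ s, q s i)
    (hmono : ∀ (t : ℕ) (q : Fin (t + 1) → Fin 3 → ℕ) (i : Fin 3) (j : Fin 2),
      R t (fun s => q s.castSucc) i j ≤ R (t + 1) q i j)
    (huniv : ∀ (t : ℕ) (q : Fin t → Fin 3 → ℕ) (j : Fin 2),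
      ((∑ i, R t q i j : ℕ) : ℤ) = ⌊(1 / 2 : ℝ) * ((∑ i, ∑ s, q s i : ℕ) : ℝ)⌋ ∨
      ((∑ i, R t q i j : ℕ) : ℤ) = ⌈(1 / 2 : ℝ) * ((∑ i, ∑ s, q s i : ℕ) : ℝ)⌉) :
    ∀ b : ℝ, 0 < b →
      ∃ (t : ℕ) (q : Fin t → Fin 3 → ℕ) (i : Fin 3) (j : Fin 2), 1 ≤ t ∧
        b < |((R t q i j : ℕ) : ℝ) - (1 / 2 : ℝ) * ((∑ s, q s i : ℕ) : ℝ)| := by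
  intro b _
  obtain ⟨t, q, i, ht, hbias⟩ := university_quota_implies_unbounded_bias_general (by simp)
    ⟨hrow, hmono⟩ (by simp) (by norm_num) (by norm_num) (fun t q => huniv t q 0) b
  exact ⟨t, q, i, 0, ht, hbias⟩
end

section
/- Let C be a finite set of categories with |C| ≥ 2, let α : C → (0,1) satisfy ∑_{j∈C} α_j = 1, and let K ∈ ℕ. Then there exists a finitely supported probability distribution over rosters σ : {1,…,K} → C such that, writing N_j(k) = #{ i ≤ k : σ(i) = j } for the number of positions among the first k assigned to category j: (i) almost surely N_j(k) ∈ {⌊k·α_j⌋, ⌈k·α_j⌉} for every k ≤ K and every j ∈ C; and (ii) E[N_j(k)] = k·α_j for every k ≤ K and every j ∈ C. -/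
open Finset

/-!
Send one unit of flow into the network from each position `i`, split among the categories in the
proportions `α i`, and let the units of each category travel along a path whose `k`-th edge carries
the entitlement accumulated over the first `k` positions. The net inflows of this flow are integers,
so it is a convex combination of integral flows with the same net inflows whose value on every edge
is the floor or the ceiling of the original one. An integral flow assigns each position to a single
category, so it is a roster, and its path edges carry the prefix counts of that roster.

The convex decomposition is the integrality of network polytopes: at a vertex of integral net inflow
a non-integral edge value cannot occur alone, so the edges with non-integral values, if any, support
a circulation. A feasible flow can be moved along it in both directions, hence is not extreme.
-/

section Circulation

variable {E V R : Type*} [DecidableEq V]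

/-- The net inflow at each vertex of a flow on the directed graph whose edge `e` runs from `s e`
to `t e`. -/
def netInflow [Fintype E] (R : Type*) [Ring R] (s t : E → V) : (E → R) →ₗ[R] (V → R) :=
  LinearMap.pi fun v =>
    ∑ e with t e = v, LinearMap.proj e - ∑ e with s e = v, LinearMap.proj e

lemma netInflow_apply [Fintype E] [Ring R] (s t : E → V) (f : E → R) (v : V) :
    netInflow R s t f v = ∑ e with t e = v, f e - ∑ e with s e = v, f e := by
  simp [netInflow]

lemma netInflow_intCast [Fintype E] [Ring R] (s t : E → V) (z : E → ℤ) :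
    netInflow R s t (Int.cast ∘ z) = Int.cast ∘ netInflow ℤ s t z := by
  ext v
  simp [netInflow_apply]

lemma netInflow_mem [Fintype E] [Ring R] (s t : E → V) {H : AddSubgroup R} {f : E → R}
    (hf : ∀ e, f e ∈ H) (v : V) : netInflow R s t f v ∈ H := by
  rw [netInflow_apply]
  exact sub_mem (sum_mem fun e _ => hf e) (sum_mem fun e _ => hf e)

lemma netInflow_of_supported [Fintype E] [Ring R] (s t : E → V) {F : Finset E} {f : E → R}
    (hf : ∀ e ∉ F, f e = 0) (v : V) :
    netInflow R s t f v = ∑ e ∈ F with t e = v, f e - ∑ e ∈ F with s e = v, f e := by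
  have hsum : ∀ r : E → V, ∑ e with r e = v, f e = ∑ e ∈ F with r e = v, f e := fun r =>
    (sum_subset (filter_subset_filter _ (subset_univ F)) (by grind)).symm
  rw [netInflow_apply, hsum, hsum]

/-- The degree of the vertex `v` in the subgraph with edge set `F`; a loop counts twice. -/
def degreeIn (s t : E → V) (F : Finset E) (v : V) : ℕ :=
  #{e ∈ F | s e = v} + #{e ∈ F | t e = v}

/-- The vertices incident to some edge in `F`. -/
def endpoints (s t : E → V) (F : Finset E) : Finset V :=
  F.image s ∪ F.image t

lemma src_mem_endpoints (s t : E → V) {F : Finset E} {e : E} (he : e ∈ F) :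
    s e ∈ endpoints s t F :=
  mem_union_left _ (mem_image_of_mem s he)

lemma tgt_mem_endpoints (s t : E → V) {F : Finset E} {e : E} (he : e ∈ F) :
    t e ∈ endpoints s t F :=
  mem_union_right _ (mem_image_of_mem t he)

lemma degreeIn_ne_zero {s t : E → V} {F : Finset E} {v : V} (hv : v ∈ endpoints s t F) :
    degreeIn s t F v ≠ 0 := by
  simp only [degreeIn, ne_eq, Nat.add_eq_zero_iff, card_eq_zero, filter_eq_empty_iff]
  simp only [endpoints, mem_union, mem_image] at hv
  grind

lemma sum_degreeIn (s t : E → V) (F : Finset E) :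
    ∑ v ∈ endpoints s t F, degreeIn s t F v = 2 * #F := by
  simp only [degreeIn, sum_add_distrib]
  rw [← card_eq_sum_card_fiberwise fun e he => src_mem_endpoints s t he,
    ← card_eq_sum_card_fiberwise fun e he => tgt_mem_endpoints s t he, two_mul]

lemma card_endpoints_le (s t : E → V) (F : Finset E) (hdeg : ∀ v, degreeIn s t F v ≠ 1) :
    #(endpoints s t F) ≤ #F := by
  have h : #(endpoints s t F) * 2 ≤ ∑ v ∈ endpoints s t F, degreeIn s t F v :=
    card_nsmul_le_sum _ _ 2 fun v hv =>
      (Nat.two_le_iff _).2 ⟨degreeIn_ne_zero hv, hdeg v⟩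
  rw [sum_degreeIn] at h
  lia

variable [Fintype E]

lemma netInflow_eq_zero_of_notMem_endpoints [Ring R] {s t : E → V} {F : Finset E} {f : E → R}
    (hf : ∀ e ∉ F, f e = 0) {v : V} (hv : v ∉ endpoints s t F) : netInflow R s t f v = 0 := by
  rw [netInflow_of_supported s t hf, filter_eq_empty_iff.2, filter_eq_empty_iff.2, sub_self]
  · exact fun e he hev => hv (hev ▸ src_mem_endpoints s t he)
  · exact fun e he hev => hv (hev ▸ tgt_mem_endpoints s t he)

lemma sum_netInflow [Ring R] (s t : E → V) {F : Finset E} {f : E → R} (hf : ∀ e ∉ F, f e = 0) :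
    ∑ v ∈ endpoints s t F, netInflow R s t f v = 0 := by
  simp only [netInflow_of_supported s t hf, sum_sub_distrib]
  rw [sum_fiberwise_of_maps_to fun e he => src_mem_endpoints s t he,
    sum_fiberwise_of_maps_to fun e he => tgt_mem_endpoints s t he, sub_self]

lemma exists_circulation_of_degreeIn_ne_one (R : Type*) [Field R] (s t : E → V) {F : Finset E}
    (hF : F.Nonempty) (hdeg : ∀ v, degreeIn s t F v ≠ 1) :
    ∃ d : E → R, d ≠ 0 ∧ (∀ e ∉ F, d e = 0) ∧ netInflow R s t d = 0 := by
  obtain ⟨e₀, he₀⟩ := hF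
  -- Conservation at `s e₀` follows from conservation at the other endpoints; leaving it out makes
  -- the number of equations smaller than the number of unknowns.
  let W := (endpoints s t F).erase (s e₀)
  let L : (F → R) →ₗ[R] (W → R) :=
    LinearMap.funLeft R R Subtype.val ∘ₗ netInflow R s t ∘ₗ
      Function.ExtendByZero.linearMap R Subtype.val
  have hker : LinearMap.ker L ≠ ⊥ := by
    apply LinearMap.ker_ne_bot_of_finrank_lt
    simp only [Module.finrank_fintype_fun_eq_card, Fintype.card_coe]
    exact (card_erase_lt_of_mem (src_mem_endpoints s t he₀)).trans_le
      (card_endpoints_le s t F hdeg)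
  obtain ⟨c, hc, hc₀⟩ := (Submodule.ne_bot_iff _).1 hker
  set d : E → R := Function.extend Subtype.val c 0
  have hsupp : ∀ e ∉ F, d e = 0 := fun e he =>
    Function.extend_apply' _ _ _ fun ⟨e', he'⟩ => he (he' ▸ e'.2)
  have hcons : ∀ v ≠ s e₀, netInflow R s t d v = 0 := by
    intro v hv
    by_cases hvF : v ∈ endpoints s t F
    · exact congrFun (LinearMap.mem_ker.1 hc) ⟨v, mem_erase.2 ⟨hv, hvF⟩⟩
    · exact netInflow_eq_zero_of_notMem_endpoints hsupp hvF
  refine ⟨d, fun hd => hc₀ ?_, hsupp, funext fun v => ?_⟩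
  · exact funext fun e => by
      simpa [d, Subtype.val_injective.extend_apply] using congrFun hd e
  · by_cases hv : v = s e₀
    · rw [hv, ← sum_eq_single_of_mem (s e₀) (src_mem_endpoints s t he₀) fun v _ => hcons v,
        sum_netInflow s t hsupp, Pi.zero_apply]
    · exact hcons v hv

lemma degreeIn_ne_one_of_netInflow_mem [Ring R] (s t : E → V) {H : AddSubgroup R} {f : E → R}
    {F : Finset E} (hF : ∀ e, e ∈ F ↔ f e ∉ H) {v : V} (hf : netInflow R s t f v ∈ H) :
    degreeIn s t F v ≠ 1 := by
  classical
  have hsum : ∑ e ∈ F with t e = v, f e - ∑ e ∈ F with s e = v, f e ∈ H := by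
    let r : E → R := fun e => if e ∈ F then 0 else f e
    have hr : netInflow R s t r v ∈ H := by
      refine netInflow_mem s t (fun e => ?_) v
      simp only [r]
      split_ifs with he
      · exact zero_mem H
      · exact not_not.1 (he ∘ (hF e).2)
    have hfr := sub_mem hf hr
    rw [← Pi.sub_apply, ← map_sub, netInflow_of_supported s t (F := F) (by simp +contextual [r])]
      at hfr
    convert! hfr using 2 <;> exact sum_congr rfl (by simp +contextual [r])
  have hnot : ∀ {e₀ : E} {p : E → Prop} [DecidablePred p], {e ∈ F | p e} = {e₀} → f e₀ ∉ H :=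
    fun h => (hF _).1 (mem_of_mem_filter _ (h ▸ mem_singleton_self _))
  intro hdeg
  rcases Nat.add_eq_one_iff.1 hdeg with ⟨hs, ht⟩ | ⟨hs, ht⟩
  · obtain ⟨e₀, he₀⟩ := card_eq_one.1 ht
    rw [card_eq_zero.1 hs, he₀, sum_singleton, sum_empty, sub_zero] at hsum
    exact hnot he₀ hsum
  · obtain ⟨e₀, he₀⟩ := card_eq_one.1 hs
    rw [card_eq_zero.1 ht, he₀, sum_singleton, sum_empty, zero_sub, neg_mem_iff] at hsum
    exact hnot he₀ hsum

end Circulation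

section FeasibleFlow

open Filter Topology

lemma eq_zero_of_mem_extremePoints_of_eventually_mem {M : Type*} [AddCommGroup M] [Module ℝ M]
    {A : Set M} {x d : M} (hx : x ∈ A.extremePoints ℝ) (hd : ∀ᶠ ε in 𝓝 (0 : ℝ), x + ε • d ∈ A) :
    d = 0 := by
  have hneg : ∀ᶠ ε in 𝓝 (0 : ℝ), x + -ε • d ∈ A :=
    (continuous_neg.tendsto' (0 : ℝ) 0 neg_zero).eventually hd
  obtain ⟨ε, ⟨hadd, hsub⟩, hε⟩ :=
    (((hd.and hneg).filter_mono nhdsWithin_le_nhds).and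
      (self_mem_nhdsWithin (s := ({0}ᶜ : Set ℝ)))).exists
  rw [neg_smul, ← sub_eq_add_neg] at hsub
  have hfix : x + ε • d = x := hx.2 hadd hsub (mem_openSegment_add_sub x (ε • d))
  exact (smul_eq_zero_iff_right hε).1 (add_eq_left.1 hfix)

variable {E V R : Type*} [Fintype E] [DecidableEq V]

/-- The flows with values between the capacities `l` and `u` and with prescribed net inflows
`b`. -/
def feasibleFlows [Ring R] [PartialOrder R] (s t : E → V) (l u : E → R) (b : V → R) :
    Set (E → R) :=
  Set.Icc l u ∩ netInflow R s t ⁻¹' {b}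

lemma isCompact_feasibleFlows (s t : E → V) (l u : E → ℝ) (b : V → ℝ) :
    IsCompact (feasibleFlows s t l u b) :=
  isCompact_Icc.inter_right <| isClosed_singleton.preimage (LinearMap.continuous_on_pi _)

lemma convex_feasibleFlows (s t : E → V) (l u : E → ℝ) (b : V → ℝ) :
    Convex ℝ (feasibleFlows s t l u b) :=
  (convex_Icc l u).inter <| (convex_singleton b).linear_preimage (netInflow ℝ s t)

lemma finite_feasibleFlows_int (s t : E → V) (l u : E → ℤ) (b : V → ℤ) :
    (feasibleFlows s t l u b).Finite := by
  classical
  exact (Set.finite_Icc l u).inter_of_left _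

lemma intCast_mem_feasibleFlows [Ring R] [PartialOrder R] [IsStrictOrderedRing R] {s t : E → V}
    {l u z : E → ℤ} {b : V → ℤ} :
    (Int.cast ∘ z : E → R) ∈ feasibleFlows s t (Int.cast ∘ l) (Int.cast ∘ u) (Int.cast ∘ b) ↔
      z ∈ feasibleFlows s t l u b := by
  have hb : (Int.cast ∘ netInflow ℤ s t z : V → R) = Int.cast ∘ b ↔ netInflow ℤ s t z = b :=
    Int.cast_injective.comp_left.eq_iff
  simp [feasibleFlows, netInflow_intCast, hb, Pi.le_def]

lemma eventually_add_smul_mem_feasibleFlows {s t : E → V} {l u f d : E → ℝ} {b : V → ℝ}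
    (hf : f ∈ feasibleFlows s t l u b) (hd : netInflow ℝ s t d = 0)
    (hlt : ∀ e, d e ≠ 0 → f e ∈ Set.Ioo (l e) (u e)) :
    ∀ᶠ ε in 𝓝 (0 : ℝ), f + ε • d ∈ feasibleFlows s t l u b := by
  have hbox : ∀ e, ∀ᶠ ε in 𝓝 (0 : ℝ), f e + ε * d e ∈ Set.Icc (l e) (u e) := by
    intro e
    by_cases he : d e = 0
    · simp [he, hf.1.1 e, hf.1.2 e]
    · have hcont : Tendsto (fun ε : ℝ => f e + ε * d e) (𝓝 0) (𝓝 (f e)) :=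
        Continuous.tendsto' (by fun_prop) _ _ (by simp)
      exact hcont (Icc_mem_nhds (hlt e he).1 (hlt e he).2)
  filter_upwards [eventually_all.2 hbox] with ε hε
  refine ⟨⟨fun e => (hε e).1, fun e => (hε e).2⟩, ?_⟩
  rw [Set.mem_preimage, map_add, map_smul, hd, smul_zero, add_zero]
  exact hf.2

lemma extremePoints_feasibleFlows_subset (s t : E → V) (l u : E → ℤ) (b : V → ℤ) :
    (feasibleFlows s t (Int.cast ∘ l : E → ℝ) (Int.cast ∘ u) (Int.cast ∘ b)).extremePoints ℝ ⊆
      (Int.cast ∘ ·) '' feasibleFlows s t l u b := by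
  classical
  intro f hf
  have hfb : netInflow ℝ s t f = Int.cast ∘ b := hf.1.2
  have hint : ∀ e, f e ∈ (Int.castAddHom ℝ).range := by
    let F : Finset E := {e | f e ∉ (Int.castAddHom ℝ).range}
    have hF : ∀ e, e ∈ F ↔ f e ∉ (Int.castAddHom ℝ).range := fun e => mem_filter_univ e
    have hdeg : ∀ v, degreeIn s t F v ≠ 1 := fun v =>
      degreeIn_ne_one_of_netInflow_mem s t hF ⟨b v, by simp [hfb]⟩
    by_contra! hfrac
    obtain ⟨d, hd₀, hsupp, hd⟩ :=
      exists_circulation_of_degreeIn_ne_one ℝ s t (hfrac.imp fun e => (hF e).2) hdeg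
    refine hd₀ (eq_zero_of_mem_extremePoints_of_eventually_mem hf
      (eventually_add_smul_mem_feasibleFlows hf.1 hd fun e he => ?_))
    have heF : ∀ m : ℤ, (m : ℝ) ≠ f e := fun m hm =>
      (hF e).1 (not_imp_comm.1 (hsupp e) he) ⟨m, hm⟩
    exact ⟨(hf.1.1.1 e).lt_of_ne (heF _), (hf.1.1.2 e).lt_of_ne (heF _).symm⟩
  choose z hz using hint
  obtain rfl : Int.cast ∘ z = f := funext hz
  exact ⟨z, intCast_mem_feasibleFlows.1 hf.1, rfl⟩

theorem convexHull_intCast_feasibleFlows (s t : E → V) (l u : E → ℤ) (b : V → ℤ) :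
    convexHull ℝ ((Int.cast ∘ · : (E → ℤ) → E → ℝ) '' feasibleFlows s t l u b) =
      feasibleFlows s t (Int.cast ∘ l) (Int.cast ∘ u) (Int.cast ∘ b) := by
  apply Set.Subset.antisymm
  · refine convexHull_min ?_ (convex_feasibleFlows ..)
    rintro _ ⟨z, hz, rfl⟩
    exact intCast_mem_feasibleFlows.2 hz
  · rw [← closure_convexHull_extremePoints (isCompact_feasibleFlows ..) (convex_feasibleFlows ..)]
    exact closure_minimal (convexHull_mono (extremePoints_feasibleFlows_subset ..))
      (((finite_feasibleFlows_int ..).image _).isClosed_convexHull ℝ)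

end FeasibleFlow

lemma exists_eq_pi_single_of_sum_eq_one {ι : Type*} [Fintype ι] [DecidableEq ι] {x : ι → ℤ}
    (hx : 0 ≤ x) (hsum : ∑ i, x i = 1) : ∃ i, x = Pi.single i 1 := by
  obtain ⟨i, -, hi⟩ := exists_ne_zero_of_sum_ne_zero (hsum.trans_ne one_ne_zero)
  have hpos : 1 ≤ x i := (hx i).lt_of_ne' hi
  have hrest : 0 ≤ ∑ i' ∈ univ.erase i, x i' := sum_nonneg fun i' _ => hx i'
  rw [← add_sum_erase _ _ (mem_univ i)] at hsum
  have hzero : ∀ i' ∈ univ.erase i, x i' = 0 :=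
    (sum_eq_zero_iff_of_nonneg fun i' _ => hx i').1 (by lia)
  refine ⟨i, funext fun i' => ?_⟩
  by_cases h : i' = i
  · subst h
    rw [Pi.single_eq_same]
    lia
  · rw [Pi.single_eq_of_ne h, hzero i' (by simpa using h)]

lemma eq_floor_or_eq_ceil {R : Type*} [Ring R] [LinearOrder R] [FloorRing R] {x : R} {m : ℤ}
    (hfloor : ⌊x⌋ ≤ m) (hceil : m ≤ ⌈x⌉) : m = ⌊x⌋ ∨ m = ⌈x⌉ := by
  have := Int.ceil_le_floor_add_one x
  lia

section Roster

variable {C : Type*} {K : ℕ}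

/-- The number `N_j(k)` of positions among the first `k` which the roster `σ` assigns to the
category `j`. -/
def prefixCount [DecidableEq C] (σ : Fin K → C) (k : ℕ) (j : C) : ℕ :=
  #{i : Fin K | (i : ℕ) < k ∧ σ i = j}

lemma prefixCount_zero [DecidableEq C] (σ : Fin K → C) (j : C) : prefixCount σ 0 j = 0 := by
  simp [prefixCount]

lemma prefixCount_succ [DecidableEq C] (σ : Fin K → C) (i : Fin K) (j : C) :
    prefixCount σ (i + 1) j = prefixCount σ i j + if σ i = j then 1 else 0 := by
  have h : ∀ i' : Fin K, (if (i' : ℕ) < i + 1 ∧ σ i' = j then 1 else 0) =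
      (if (i' : ℕ) < i ∧ σ i' = j then 1 else 0) +
        if i' = i then (if σ i = j then 1 else 0) else 0 := by grind
  simp only [prefixCount, card_filter, h, sum_add_distrib, sum_ite_eq', mem_univ, if_true]

/-- The vertices of the roster network: every position has a row vertex, where its unit of flow
starts, and a cell vertex for each category; all paths of cells begin and end in the hub. -/
inductive RosterVertex (K : ℕ) (C : Type*)
  | row (i : Fin K)
  | cell (i : Fin K) (j : C)
  | hub
  deriving DecidableEq

/-- The edges of the roster network: the entry edges `.inl (i, j)`, which assign position `i` to
category `j`, and the prefix edges `.inr (k, j)`, which carry `N_j(k)`. -/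
abbrev RosterEdge (K : ℕ) (C : Type*) : Type _ := (Fin K × C) ⊕ (Fin (K + 1) × C)

/-- The tail of an edge of the roster network. -/
def rosterSrc : RosterEdge K C → RosterVertex K C
  | .inl (i, _) => .row i
  | .inr (k, j) => Fin.cases .hub (fun i => .cell i j) k

/-- The head of an edge of the roster network. -/
def rosterTgt : RosterEdge K C → RosterVertex K C
  | .inl (i, j) => .cell i j
  | .inr (k, j) => Fin.lastCases .hub (fun i => .cell i j) k

/-- The flow of a reservation scheme whose `i`-th position gives the share `α i j` to category
`j`. -/
def rosterFlow (α : ℕ → C → ℝ) : RosterEdge K C → ℝ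
  | .inl (i, j) => α i j
  | .inr (k, j) => ∑ i ∈ range k, α i j

/-- The net inflows of every roster flow: each row vertex supplies one unit, and the hub absorbs
all of them. -/
def rosterInflow : RosterVertex K C → ℤ
  | .row _ => -1
  | .cell _ _ => 0
  | .hub => K

variable [Fintype C] [DecidableEq C] {R : Type*} [Ring R] (f : RosterEdge K C → R)

lemma sum_rosterSrc (v : RosterVertex K C) :
    ∑ e with rosterSrc e = v, f e =
      ∑ i, ∑ j, (if .row i = v then f (.inl (i, j)) else 0) +
        (∑ j, (if .hub = v then f (.inr (0, j)) else 0) +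
          ∑ i : Fin K, ∑ j, if .cell i j = v then f (.inr (i.succ, j)) else 0) := by
  rw [sum_filter]
  simp only [Fintype.sum_sum_type, Fintype.sum_prod_type, Fin.sum_univ_succ (n := K), rosterSrc,
    Fin.cases_zero, Fin.cases_succ]
  congr!

lemma sum_rosterTgt (v : RosterVertex K C) :
    ∑ e with rosterTgt e = v, f e =
      ∑ i, ∑ j, (if .cell i j = v then f (.inl (i, j)) else 0) +
        (∑ i : Fin K, ∑ j, (if .cell i j = v then f (.inr (i.castSucc, j)) else 0) +
          ∑ j, if .hub = v then f (.inr (Fin.last K, j)) else 0) := by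
  rw [sum_filter]
  simp only [Fintype.sum_sum_type, Fintype.sum_prod_type, Fin.sum_univ_castSucc (n := K),
    rosterTgt, Fin.lastCases_last, Fin.lastCases_castSucc]
  congr!

lemma netInflow_roster_row (i : Fin K) :
    netInflow R rosterSrc rosterTgt f (.row i) = -∑ j, f (.inl (i, j)) := by
  simp [netInflow_apply, sum_rosterSrc, sum_rosterTgt, sum_ite_irrel]

lemma netInflow_roster_cell (i : Fin K) (j : C) :
    netInflow R rosterSrc rosterTgt f (.cell i j) =
      f (.inl (i, j)) + f (.inr (i.castSucc, j)) - f (.inr (i.succ, j)) := by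
  simp [netInflow_apply, sum_rosterSrc, sum_rosterTgt, ite_and]

lemma netInflow_roster_hub :
    netInflow R rosterSrc rosterTgt f .hub =
      ∑ j, f (.inr (Fin.last K, j)) - ∑ j, f (.inr (0, j)) := by
  simp [netInflow_apply, sum_rosterSrc, sum_rosterTgt]

lemma netInflow_rosterFlow {α : ℕ → C → ℝ} (hα : ∀ i, ∑ j, α i j = 1) :
    netInflow ℝ rosterSrc rosterTgt (rosterFlow α : RosterEdge K C → ℝ) =
      Int.cast ∘ rosterInflow := by
  ext (i | ⟨i, j⟩ | -)
  · simp [netInflow_roster_row, rosterFlow, rosterInflow, hα]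
  · simp [netInflow_roster_cell, rosterFlow, rosterInflow, sum_range_succ, add_comm]
  · rw [netInflow_roster_hub, Function.comp_apply]
    simp only [rosterFlow, rosterInflow]
    rw [sum_comm]
    simp [hα]

lemma exists_prefixCount_eq_of_netInflow {z : RosterEdge K C → ℤ}
    (hz : netInflow ℤ rosterSrc rosterTgt z = rosterInflow) (hentry : ∀ e, 0 ≤ z (.inl e))
    (hzero : ∀ j, z (.inr (0, j)) = 0) :
    ∃ σ : Fin K → C, ∀ (k : Fin (K + 1)) j, (prefixCount σ k j : ℤ) = z (.inr (k, j)) := by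
  have hrow : ∀ i, ∑ j, z (.inl (i, j)) = 1 := fun i => by
    simpa [netInflow_roster_row, rosterInflow] using congrFun hz (.row i)
  have hcell : ∀ i j, z (.inr (i.succ, j)) = z (.inr (i.castSucc, j)) + z (.inl (i, j)) := by
    intro i j
    have h := congrFun hz (.cell i j)
    simp only [netInflow_roster_cell, rosterInflow] at h
    lia
  choose σ hσ using fun i => exists_eq_pi_single_of_sum_eq_one (fun j => hentry (i, j)) (hrow i)
  refine ⟨σ, fun k j => ?_⟩
  induction k using Fin.induction with
  | zero => simp [prefixCount_zero, hzero]
  | succ i ih =>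
    rw [hcell, ← ih, congrFun (hσ i) j]
    simp [prefixCount_succ, Pi.single_apply, eq_comm]

end Roster

theorem random_roster_exists_general
    {C : Type*} [Fintype C] [DecidableEq C] (α : ℕ → C → ℝ) (hα0 : ∀ i j, 0 ≤ α i j)
    (hαsum : ∀ i, ∑ j, α i j = 1) (K : ℕ) :
    ∃ (N : ℕ) (p : Fin N → ℝ) (σ : Fin N → Fin K → C),
      (∀ a, 0 ≤ p a) ∧ (∑ a, p a = 1) ∧
      (∀ a, ∀ k ≤ K, ∀ j, (prefixCount (σ a) k j : ℤ) = ⌊∑ i ∈ range k, α i j⌋ ∨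
        (prefixCount (σ a) k j : ℤ) = ⌈∑ i ∈ range k, α i j⌉) ∧
      (∀ k ≤ K, ∀ j, ∑ a, p a * (prefixCount (σ a) k j : ℝ) = ∑ i ∈ range k, α i j) := by
  let f : RosterEdge K C → ℝ := rosterFlow α
  have hf : f ∈ convexHull ℝ ((Int.cast ∘ ·) ''
      feasibleFlows rosterSrc rosterTgt (fun e => ⌊f e⌋) (fun e => ⌈f e⌉) rosterInflow) := by
    rw [convexHull_intCast_feasibleFlows]
    exact ⟨⟨fun e => Int.floor_le _, fun e => Int.le_ceil _⟩, netInflow_rosterFlow hαsum⟩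
  obtain ⟨ι, _, w, y, hw0, hw1, hy, hwy⟩ := mem_convexHull_iff_exists_fintype.1 hf
  choose z hz hzy using hy
  choose σ hσ using fun a => exists_prefixCount_eq_of_netInflow (hz a).2
    (fun e => (Int.floor_nonneg.2 (hα0 _ _)).trans ((hz a).1.1 (.inl e)))
    (fun j => le_antisymm (by simpa [f, rosterFlow] using (hz a).1.2 (.inr (0, j)))
      (by simpa [f, rosterFlow] using (hz a).1.1 (.inr (0, j))))
  let φ := (Fintype.equivFin ι).symm
  refine ⟨Fintype.card ι, w ∘ φ, σ ∘ φ, fun a => hw0 _, (φ.sum_comp w).trans hw1, ?_, ?_⟩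
  · intro a k hk j
    let e : RosterEdge K C := .inr (⟨k, Nat.lt_succ_of_le hk⟩, j)
    rw [Function.comp_apply, hσ (φ a) ⟨k, Nat.lt_succ_of_le hk⟩ j]
    exact eq_floor_or_eq_ceil ((hz (φ a)).1.1 e) ((hz (φ a)).1.2 e)
  · intro k hk j
    have hmean := congrFun hwy (.inr (⟨k, Nat.lt_succ_of_le hk⟩, j))
    simp only [Finset.sum_apply, Pi.smul_apply, ← hzy, Function.comp_apply, smul_eq_mul, ← hσ,
      Int.cast_natCast] at hmean
    exact (φ.sum_comp fun a => w a * (prefixCount (σ a) k j : ℝ)).trans hmean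

/-- Random roster: for a reservation scheme α on a finite set of
categories and K positions, there is a finitely supported probability
distribution over rosters σ : {1,…,K} → C such that almost surely every prefix
count N_j(k) is the floor or the ceiling of k·α_j, and E[N_j(k)] = k·α_j. -/
theorem random_roster_exists
    (C : Type) [Fintype C] [DecidableEq C] (hC : 2 ≤ Fintype.card C)
    (α : C → ℝ) (hα0 : ∀ j, 0 < α j) (hα1 : ∀ j, α j < 1)
    (hαsum : ∑ j, α j = 1) (K : ℕ) :
    ∃ (N : ℕ) (p : Fin N → ℝ) (σ : Fin N → Fin K → C),
      (∀ a, 0 ≤ p a) ∧ (∑ a, p a = 1) ∧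
      (∀ a, p a ≠ 0 → ∀ k ≤ K, ∀ j : C,
        (((Finset.univ.filter fun i : Fin K => (i : ℕ) < k ∧ σ a i = j).card : ℕ) : ℤ)
            = ⌊(k : ℝ) * α j⌋ ∨
        (((Finset.univ.filter fun i : Fin K => (i : ℕ) < k ∧ σ a i = j).card : ℕ) : ℤ)
            = ⌈(k : ℝ) * α j⌉) ∧
      (∀ k ≤ K, ∀ j : C,
        ∑ a, p a * (((Finset.univ.filter fun i : Fin K => (i : ℕ) < k ∧ σ a i = j).card : ℕ) : ℝ)
          = (k : ℝ) * α j) :=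
  have ⟨N, p, σ, hp, hp1, hround, hmean⟩ :=
    random_roster_exists_general (fun _ => α) (fun _ j => (hα0 j).le) (fun _ => hαsum) K
  ⟨N, p, σ, hp, hp1, fun a _ => by simpa [prefixCount] using hround a,
    by simpa [prefixCount] using hmean⟩
end

section
/- For every reservation problem over a finite horizon T there exists a lottery solution — a finitely supported probability distribution over monotone sequences (Z^1,…,Z^T) of reservation tables — such that: (i) almost surely Z^t_{ij} ∈ {⌊α_j·Q_i^t⌋, ⌈α_j·Q_i^t⌉} for every period t, department i and category j (the lottery stays within department quota); and (ii) E[Z^t_{ij}] = α_j·Q_i^t for every t, i, j (the lottery is unbiased). -/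
open Finset

/-- Period-`t` cumulative vacancy count of department `i`: `Q_i^t = ∑_{s ≤ t} q_i^s`. -/
def cumQ {D : Type} {T : ℕ} (q : Fin T → D → ℕ) (t : Fin T) (i : D) : ℕ :=
  ∑ s ∈ Finset.univ.filter (fun s : Fin T => s ≤ t), q s i

/-!
Number the seats of a department `0, 1, 2, …` in the order in which they fall vacant, and cut the
half-line of cumulative shares of each category into unit slots. Seat `s` moves the cumulative share
of category `j` from `α j * s` to `α j * (s + 1)`; let it be matched to slot `(j, l)` with
probability the length of the part of this interval lying in `[l, l + 1]`. The resulting matrix has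
row sums `1` and column sums at most `1`, so Birkhoff's theorem makes it the matrix of marginals of
a random injection of seats into slots. Among the first `k` seats, such an injection almost surely
meets every slot contained in `[0, α j * k]` and no slot to the right of `α j * k`, so it gives
category `j` between `⌊α j * k⌋` and `⌈α j * k⌉` seats, and `α j * k` in expectation. Drawing one
injection and giving each department the first `Q_i^t` seats in period `t` yields the lottery.
-/

section Birkhoff

open Matrix

variable {I J R : Type*}

lemma exists_embedding_of_injective_of_ne_inl {K : Type*} {g : I → K ⊕ J}
    (hg : Function.Injective g) (hinl : ∀ i k, g i ≠ .inl k) :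
    ∃ f : I ↪ J, ∀ i, g i = .inr (f i) := by
  have exists_inr (i) : ∃ j, g i = .inr j := by
    rcases h : g i with k | j
    · exact absurd h (hinl i k)
    · exact ⟨j, rfl⟩
  choose f hf using exists_inr
  exact ⟨⟨f, fun i i' h => hg (by rw [hf, hf, h])⟩, hf⟩

variable [Fintype I] [Fintype J] [DecidableEq J]

/-- The symmetric dilation of a doubly substochastic matrix to a doubly stochastic one: the missing
mass of each row and column is put on the diagonal. -/
def symmDilation [DecidableEq I] [Ring R] (A : Matrix I J R) : Matrix (I ⊕ J) (I ⊕ J) R :=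
  fromBlocks (diagonal fun i => 1 - ∑ j, A i j) A Aᵀ (diagonal fun j => 1 - ∑ i, A i j)

lemma symmDilation_mem_doublyStochastic [DecidableEq I] [Ring R] [PartialOrder R]
    [IsOrderedRing R] {A : Matrix I J R} (hA : ∀ i j, 0 ≤ A i j) (hrow : ∀ i, ∑ j, A i j ≤ 1)
    (hcol : ∀ j, ∑ i, A i j ≤ 1) : symmDilation A ∈ doublyStochastic R (I ⊕ J) := by
  refine mem_doublyStochastic_iff_sum.2 ⟨?_, ?_, ?_⟩
  · rintro (i | j) (i' | j')
    · simpa [symmDilation, diagonal_apply] using ite_nonneg (sub_nonneg.2 (hrow i)) le_rfl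
    · exact hA i j'
    · exact hA i' j
    · simpa [symmDilation, diagonal_apply] using ite_nonneg (sub_nonneg.2 (hcol j)) le_rfl
  · rintro (i | j) <;> simp [symmDilation, Fintype.sum_sum_type, diagonal_apply]
  · rintro (i | j) <;> simp [symmDilation, Fintype.sum_sum_type, diagonal_apply]

variable [Field R] [LinearOrder R] [IsStrictOrderedRing R]

/-- Birkhoff's theorem for the dilation of `A`: the diagonal entries of the rows `I` vanish, so
almost every permutation maps `I` into `J`. -/
theorem exists_stdSimplex_embedding_marginals {A : Matrix I J R} (hA : ∀ i j, 0 ≤ A i j)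
    (hrow : ∀ i, ∑ j, A i j = 1) (hcol : ∀ j, ∑ i, A i j ≤ 1) :
    ∃ w ∈ stdSimplex R (I ↪ J), ∀ i j, ∑ f with f i = j, w f = A i j := by
  classical
  obtain ⟨v, hv0, hv1, hvA⟩ := exists_eq_sum_perm_of_mem_doublyStochastic
    (symmDilation_mem_doublyStochastic hA (fun i => (hrow i).le) hcol)
  have marginal (x y : I ⊕ J) : ∑ σ with σ x = y, v σ = symmDilation A x y := by
    simp [← hvA, Matrix.sum_apply, sum_filter, PEquiv.toMatrix_apply, eq_comm]
  have exists_embedding (σ) (hσ : v σ ≠ 0) : ∃ f : I ↪ J, ∀ i, σ (.inl i) = .inr (f i) := by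
    refine exists_embedding_of_injective_of_ne_inl (σ.injective.comp Sum.inl_injective)
      fun i i' h => hσ ?_
    have hzero : ∑ σ with σ (.inl i) = .inl i', v σ = 0 := by
      simp [marginal, symmDilation, hrow]
    exact (sum_eq_zero_iff_of_nonneg fun σ _ => hv0 σ).1 hzero σ (by simpa using h)
  obtain ⟨σ₀, -, hσ₀⟩ := exists_ne_zero_of_sum_ne_zero (hv1.trans_ne one_ne_zero)
  have : Nonempty (I ↪ J) := ⟨(exists_embedding σ₀ hσ₀).choose⟩
  choose! φ hφ using exists_embedding
  refine ⟨fun f => ∑ σ with φ σ = f, v σ, ⟨fun f => sum_nonneg fun σ _ => hv0 σ, ?_⟩,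
    fun i j => ?_⟩
  · rw [sum_fiberwise, hv1]
  · calc ∑ f with f i = j, ∑ σ with φ σ = f, v σ
        = ∑ σ with φ σ i = j, v σ := by simp [sum_fiberwise_eq_sum_filter]
      _ = ∑ σ with σ (.inl i) = .inr j, v σ := by
        simp only [sum_filter]
        refine sum_congr rfl fun σ _ => ?_
        by_cases hσ : v σ = 0
        · simp [hσ]
        · simp [hφ σ hσ i]
      _ = A i j := marginal _ _

end Birkhoff

section StdSimplex

variable {ι R : Type*} [Fintype ι] [CommRing R] [LinearOrder R] [IsStrictOrderedRing R]
  {w g : ι → R} {c : R}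

lemma eq_of_sum_mul_eq_of_le (hw : w ∈ stdSimplex R ι) (hg : ∀ a, g a ≤ c)
    (hsum : ∑ a, w a * g a = c) {a : ι} (ha : w a ≠ 0) : g a = c := by
  have hle (a) : w a * g a ≤ w a * c := mul_le_mul_of_nonneg_left (hg a) (hw.1 a)
  have heq : ∑ a, w a * g a = ∑ a, w a * c := by rw [hsum, ← sum_mul, hw.2, one_mul]
  exact mul_left_cancel₀ ha ((sum_eq_sum_iff_of_le fun a _ => hle a).1 heq a (mem_univ a))

lemma eq_of_sum_mul_eq_of_ge (hw : w ∈ stdSimplex R ι) (hg : ∀ a, c ≤ g a)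
    (hsum : ∑ a, w a * g a = c) {a : ι} (ha : w a ≠ 0) : g a = c :=
  neg_injective <| eq_of_sum_mul_eq_of_le (g := fun a => -g a) hw
    (fun a => neg_le_neg (hg a)) (by simp [hsum]) ha

end StdSimplex

section UnitOverlap

section LinearOrderedRing

variable {R : Type*} [CommRing R] [LinearOrder R] [IsStrictOrderedRing R] {x y : R} {l : ℕ}

/-- The length of `[0, x] ∩ [l, l + 1]`. -/
def unitOverlap (x : R) (l : ℕ) : R := max 0 (min 1 (x - l))

lemma unitOverlap_le_one : unitOverlap x l ≤ 1 :=
  max_le zero_le_one (min_le_left _ _)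

lemma unitOverlap_mono (h : x ≤ y) : unitOverlap x l ≤ unitOverlap y l := by
  unfold unitOverlap
  gcongr

lemma unitOverlap_eq_zero (h : x ≤ l) : unitOverlap x l = 0 :=
  max_eq_left ((min_le_right _ _).trans (sub_nonpos.2 h))

lemma unitOverlap_eq_one (h : (l + 1 : ℕ) ≤ x) : unitOverlap x l = 1 := by
  push_cast at h
  rw [unitOverlap, min_eq_left (by linarith), max_eq_right zero_le_one]

lemma sum_range_unitOverlap (x : R) (n : ℕ) :
    ∑ l ∈ range n, unitOverlap x l = max 0 (min (n : R) x) := by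
  induction n with
  | zero => simp
  | succ n ih =>
    rw [sum_range_succ, ih, unitOverlap]
    have hn : (0 : R) ≤ n := n.cast_nonneg
    push_cast
    rcases le_total x n with h | h
    · rw [min_eq_right h, min_eq_right (by linarith : x ≤ n + 1),
        max_eq_left ((min_le_right _ _).trans (sub_nonpos.2 h)), add_zero]
    · rw [min_eq_left h, max_eq_right hn, max_eq_right (le_min zero_le_one (sub_nonneg.2 h)),
        max_eq_right (le_min (by linarith) (hn.trans h)), ← min_add_add_left, add_sub_cancel]

lemma sum_fin_unitOverlap {m : ℕ} (hx0 : 0 ≤ x) (hxm : x ≤ m) :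
    ∑ l : Fin m, unitOverlap x l = x := by
  rw [Fin.sum_univ_eq_sum_range (unitOverlap x), sum_range_unitOverlap, min_eq_right hxm,
    max_eq_right hx0]

end LinearOrderedRing

section Floor

variable {R : Type*} [Semiring R] [LinearOrder R] [FloorSemiring R] [IsStrictOrderedRing R]

lemma sum_mem_Icc_floor_ceil {x : R} {m : ℕ} (hxm : x ≤ m) {h : Fin m → ℕ}
    (hle : ∀ l, h l ≤ 1) (hone : ∀ l : Fin m, (l + 1 : ℕ) ≤ x → h l = 1)
    (hzero : ∀ l : Fin m, x ≤ (l : ℕ) → h l = 0) :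
    ∑ l, h l ∈ Icc ⌊x⌋₊ ⌈x⌉₊ := by
  refine mem_Icc.2 ⟨?_, ?_⟩
  · calc ⌊x⌋₊ = min m ⌊x⌋₊ := by simp [Nat.floor_le_of_le hxm]
      _ = ∑ l : Fin m, if (l : ℕ) < ⌊x⌋₊ then 1 else 0 := by
        rw [← card_filter, Fin.card_filter_val_lt]
      _ ≤ ∑ l, h l := sum_le_sum fun l _ => by
        split_ifs with hl
        · exact (hone l ((Nat.le_floor_iff' (Nat.succ_ne_zero _)).1 hl)).ge
        · exact Nat.zero_le _
  · calc ∑ l, h l ≤ ∑ l : Fin m, if (l : ℕ) < ⌈x⌉₊ then 1 else 0 := sum_le_sum fun l _ => by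
          split_ifs with hl
          · exact hle l
          · exact (hzero l (Nat.ceil_le.1 (not_lt.1 hl))).le
      _ = min m ⌈x⌉₊ := by rw [← card_filter, Fin.card_filter_val_lt]
      _ ≤ ⌈x⌉₊ := min_le_right _ _

end Floor

lemma eq_floor_or_eq_ceil_of_mem_Icc {R : Type*} [Ring R] [LinearOrder R] [IsStrictOrderedRing R]
    [FloorRing R] {x : R} (hx : 0 ≤ x) {n : ℕ} (hn : n ∈ Icc ⌊x⌋₊ ⌈x⌉₊) :
    (n : ℤ) = ⌊x⌋ ∨ (n : ℤ) = ⌈x⌉ := by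
  rw [← Int.natCast_floor_eq_floor hx, ← Int.natCast_ceil_eq_ceil hx]
  have := Nat.ceil_le_floor_add_one x
  have := mem_Icc.1 hn
  omega

end UnitOverlap

section Seats

variable {m : ℕ} {X Y : Type*} [DecidableEq X] [DecidableEq Y]

/-- The number of the first `k` of the seats `0, …, m - 1` that the assignment `f` gives to `x`. -/
def seatCount (f : Fin m → X) (k : ℕ) (x : X) : ℕ := #{s : Fin m | s < k ∧ f s = x}

lemma seatCount_mono (f : Fin m → X) (x : X) : Monotone fun k => seatCount f k x :=
  fun _ _ hk => card_le_card (monotone_filter_right _ fun _ _ hs => ⟨hs.1.trans_le hk, hs.2⟩)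

lemma sum_seatCount [Fintype X] (f : Fin m → X) {k : ℕ} (hk : k ≤ m) :
    ∑ x, seatCount f k x = k := by
  simp only [seatCount, ← filter_filter]
  rw [← card_eq_sum_card_fiberwise fun _ _ => mem_coe.2 (mem_univ _), Fin.card_filter_val_lt,
    min_eq_right hk]

lemma seatCount_fst [Fintype Y] (f : Fin m → X × Y) (k : ℕ) (x : X) :
    seatCount (Prod.fst ∘ f) k x = ∑ y, seatCount f k (x, y) := by
  rw [seatCount, card_eq_sum_card_fiberwise (f := Prod.snd ∘ f) (t := univ) (by simp)]
  simp [seatCount, filter_filter, Prod.ext_iff, and_assoc]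

lemma seatCount_le_one (f : Fin m ↪ X) (k : ℕ) (x : X) : seatCount f k x ≤ 1 :=
  card_le_one.2 fun s hs s' hs' => f.injective <| by
    rw [(mem_filter.1 hs).2.2, (mem_filter.1 hs').2.2]

lemma sum_mul_seatCount {R : Type*} [Semiring R] [Fintype X] (w : (Fin m ↪ X) → R) (k : ℕ)
    (x : X) : ∑ f, w f * seatCount f k x = ∑ s : Fin m with s.val < k, ∑ f with f s = x, w f :=
  calc ∑ f, w f * seatCount f k x
      = ∑ f : Fin m ↪ X, ∑ s : Fin m with s.val < k, if f s = x then w f else 0 := by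
        simp only [seatCount, ← filter_filter, card_filter _ (filter _ _), Nat.cast_sum,
          Nat.cast_ite, Nat.cast_one, Nat.cast_zero, mul_sum, mul_ite, mul_one, mul_zero]
    _ = ∑ s : Fin m with s.val < k, ∑ f with f s = x, w f := by
        rw [sum_comm]
        simp only [sum_filter (fun f : Fin m ↪ X => f _ = x)]

end Seats

section Shares

variable {C R : Type*} [Fintype C] [CommRing R] [LinearOrder R] {F : ℕ → C → R} {m k : ℕ}

/-- `F k j` is the fair cumulative share of category `j` in the first `k` seats of a department. -/
structure IsShareSchedule (F : ℕ → C → R) : Prop where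
  zero : F 0 = 0
  mono : Monotone F
  sum_eq : ∀ k, ∑ j, F k j = k

namespace IsShareSchedule

lemma nonneg (hF : IsShareSchedule F) (k : ℕ) (j : C) : 0 ≤ F k j := by
  simpa [hF.zero] using hF.mono (Nat.zero_le k) j

variable [IsStrictOrderedRing R]

lemma const_mul {α : C → R} (hα0 : ∀ j, 0 ≤ α j) (hα : ∑ j, α j = 1) :
    IsShareSchedule fun k j => α j * k where
  zero := by ext; simp
  mono k k' hk j := mul_le_mul_of_nonneg_left (Nat.cast_le.2 hk) (hα0 j)
  sum_eq k := by rw [← sum_mul, hα, one_mul]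

lemma le_natCast (hF : IsShareSchedule F) (hk : k ≤ m) (j : C) : F k j ≤ m :=
  calc F k j ≤ ∑ j, F k j := single_le_sum (fun j _ => hF.nonneg k j) (mem_univ j)
    _ = k := hF.sum_eq k
    _ ≤ m := Nat.cast_le.2 hk

end IsShareSchedule

variable [IsStrictOrderedRing R]

/-- The entry at seat `s` and slot `(j, l)` is the length of `[F s j, F (s + 1) j] ∩ [l, l + 1]`,
the probability with which the lottery matches `s` to the `l`-th slot of category `j`. -/
def seatSlotMatrix (F : ℕ → C → R) (m : ℕ) : Matrix (Fin m) (C × Fin m) R :=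
  Matrix.of fun s x => unitOverlap (F (s + 1) x.1) x.2 - unitOverlap (F s x.1) x.2

lemma seatSlotMatrix_nonneg (hF : IsShareSchedule F) (s : Fin m) (x : C × Fin m) :
    0 ≤ seatSlotMatrix F m s x :=
  sub_nonneg.2 (unitOverlap_mono (hF.mono (Nat.le_succ s) x.1))

lemma sum_row_seatSlotMatrix (hF : IsShareSchedule F) (s : Fin m) :
    ∑ x, seatSlotMatrix F m s x = 1 := by
  have sum_slots {k : ℕ} (hk : k ≤ m) (j : C) : ∑ l : Fin m, unitOverlap (F k j) l = F k j :=
    sum_fin_unitOverlap (hF.nonneg k j) (hF.le_natCast hk j)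
  simp [seatSlotMatrix, Fintype.sum_prod_type, sum_sub_distrib, sum_slots s.isLt,
    sum_slots s.isLt.le, hF.sum_eq]

lemma sum_seatSlotMatrix_lt (hF : IsShareSchedule F) (hk : k ≤ m) (x : C × Fin m) :
    ∑ s : Fin m with s.val < k, seatSlotMatrix F m s x = unitOverlap (F k x.1) x.2 := by
  let u (s : ℕ) : R := unitOverlap (F s x.1) x.2
  have hu0 : u 0 = 0 := unitOverlap_eq_zero (by simp [hF.zero])
  calc ∑ s : Fin m with s.val < k, seatSlotMatrix F m s x
      = ∑ s ∈ range m with s < k, (u (s + 1) - u s) := by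
        rw [sum_filter, sum_filter]
        exact Fin.sum_univ_eq_sum_range (fun s => if s < k then u (s + 1) - u s else 0) m
    _ = ∑ s ∈ range k, (u (s + 1) - u s) := by
        congr 1
        ext s
        simpa using fun hs => hs.trans_le hk
    _ = u k := by rw [sum_range_sub, hu0, sub_zero]

lemma sum_col_seatSlotMatrix_le_one (hF : IsShareSchedule F) (x : C × Fin m) :
    ∑ s, seatSlotMatrix F m s x ≤ 1 := by
  have h := sum_seatSlotMatrix_lt hF le_rfl x
  simp only [Fin.is_lt, filter_true] at h
  exact h.trans_le unitOverlap_le_one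

end Shares

section Lottery

variable {C R : Type*} [Fintype C] [DecidableEq C] [Field R] [LinearOrder R]
  [IsStrictOrderedRing R] {F : ℕ → C → R}

theorem exists_stdSimplex_sum_mul_seatCount_eq_unitOverlap (hF : IsShareSchedule F) (m : ℕ) :
    ∃ w ∈ stdSimplex R (Fin m ↪ C × Fin m), ∀ k ≤ m, ∀ x,
      ∑ f, w f * seatCount f k x = unitOverlap (F k x.1) x.2 := by
  obtain ⟨w, hw, hmarginal⟩ := exists_stdSimplex_embedding_marginals (seatSlotMatrix_nonneg hF)
    (sum_row_seatSlotMatrix hF) (sum_col_seatSlotMatrix_le_one (m := m) hF)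
  refine ⟨w, hw, fun k hk x => ?_⟩
  rw [sum_mul_seatCount, ← sum_seatSlotMatrix_lt hF hk]
  exact sum_congr rfl fun s _ => hmarginal s x

theorem exists_stdSimplex_seatCount_fst_mem_Icc_floor_ceil [FloorSemiring R]
    (hF : IsShareSchedule F) (m : ℕ) :
    ∃ w ∈ stdSimplex R (Fin m ↪ C × Fin m), ∀ k ≤ m, ∀ j,
      (∑ f, w f * seatCount (Prod.fst ∘ f) k j = F k j) ∧
      ∀ f, w f ≠ 0 → seatCount (Prod.fst ∘ f) k j ∈ Icc ⌊F k j⌋₊ ⌈F k j⌉₊ := by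
  obtain ⟨w, hw, hmean⟩ := exists_stdSimplex_sum_mul_seatCount_eq_unitOverlap hF m
  refine ⟨w, hw, fun k hk j => ⟨?_, fun f hf => ?_⟩⟩
  · simp only [seatCount_fst, Nat.cast_sum, mul_sum]
    rw [sum_comm]
    simp only [hmean k hk, sum_fin_unitOverlap (hF.nonneg k j) (hF.le_natCast hk j)]
  · rw [seatCount_fst]
    refine sum_mem_Icc_floor_ceil (hF.le_natCast hk j) (fun l => seatCount_le_one f k (j, l))
      (fun l hl => ?_) (fun l hl => ?_)
    · have hone := (hmean k hk (j, l)).trans (unitOverlap_eq_one hl)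
      exact_mod_cast eq_of_sum_mul_eq_of_le hw
        (fun f => Nat.cast_le_one.2 (seatCount_le_one f k (j, l))) hone hf
    · have hzero := (hmean k hk (j, l)).trans (unitOverlap_eq_zero hl)
      exact_mod_cast eq_of_sum_mul_eq_of_ge hw (fun f => Nat.cast_nonneg _) hzero hf

end Lottery

lemma cumQ_mono {D : Type} {T : ℕ} (q : Fin T → D → ℕ) (i : D) : Monotone fun t => cumQ q t i :=
  fun _ _ h => sum_le_sum_of_subset (monotone_filter_right _ fun _ _ hs => hs.trans h)

/-- For every reservation problem over a finite horizon T there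
exists a finitely supported lottery over monotone sequences of reservation tables
that stays within department quota almost surely and is unbiased. -/
theorem lottery_within_department_quota_unbiased
    (D C : Type) [Fintype D] [Fintype C]
    (hD : 2 ≤ Fintype.card D) (hC : 2 ≤ Fintype.card C)
    (α : C → ℝ) (hα0 : ∀ j, 0 < α j) (hα1 : ∀ j, α j < 1)
    (hαsum : ∑ j, α j = 1)
    (T : ℕ) (q : Fin T → D → ℕ) :
    ∃ (N : ℕ) (p : Fin N → ℝ) (Z : Fin N → Fin T → D → C → ℕ),
      (∀ a, 0 ≤ p a) ∧ (∑ a, p a = 1) ∧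
      (∀ a t i, ∑ j, Z a t i j = cumQ q t i) ∧
      (∀ a (t t' : Fin T), t ≤ t' → ∀ i j, Z a t i j ≤ Z a t' i j) ∧
      (∀ a, p a ≠ 0 → ∀ t i j,
        ((Z a t i j : ℕ) : ℤ) = ⌊α j * ((cumQ q t i : ℕ) : ℝ)⌋ ∨
        ((Z a t i j : ℕ) : ℤ) = ⌈α j * ((cumQ q t i : ℕ) : ℝ)⌉) ∧
      (∀ t i j, ∑ a, p a * ((Z a t i j : ℕ) : ℝ) = α j * ((cumQ q t i : ℕ) : ℝ)) := by
  classical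
  let m := univ.sup fun x : Fin T × D => cumQ q x.1 x.2
  have cumQ_le (t i) : cumQ q t i ≤ m :=
    le_sup (f := fun x : Fin T × D => cumQ q x.1 x.2) (mem_univ (t, i))
  obtain ⟨w, ⟨hw0, hw1⟩, hw⟩ := exists_stdSimplex_seatCount_fst_mem_Icc_floor_ceil
    (IsShareSchedule.const_mul (fun j => (hα0 j).le) hαsum) m
  let e := (Fintype.equivFin (Fin m ↪ C × Fin m)).symm
  refine ⟨_, w ∘ e, fun a t i j => seatCount (Prod.fst ∘ e a) (cumQ q t i) j, fun a => hw0 _,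
    (e.sum_comp w).trans hw1, fun a t i => sum_seatCount _ (cumQ_le t i),
    fun a t t' h i j => seatCount_mono _ j (cumQ_mono q i h), fun a ha t i j => ?_,
    fun t i j => ?_⟩
  · exact eq_floor_or_eq_ceil_of_mem_Icc (mul_nonneg (hα0 j).le (Nat.cast_nonneg _))
      ((hw _ (cumQ_le t i) j).2 _ ha)
  · exact (e.sum_comp fun f => w f * (seatCount (Prod.fst ∘ f) (cumQ q t i) j : ℝ)).trans
      (hw _ (cumQ_le t i) j).1
end
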